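/- Let d ≥ 1 be an integer, let r = p^e be a power of a prime p with integer e ≥ 0, and set N = (r−1)(d+2) and k = ⌈((r−1)/r)·d⌉. Then for every continuous map f: Δ_N → ℝ^d there exist r pairwise disjoint faces σ_1, …, σ_r in the k-skeleton of Δ_N such that f(σ_1) ∩ ⋯ ∩ f(σ_r) ≠ ∅. (The topological generalized Van Kampen–Flores theorem; the case m = 0 of the topological generalized transversal Van Kampen–Flores theorem.) -/

import Mathlib

open scoped BigOperators

noncomputable section

/-- The standard `N`-dimensional simplex, realized in Euclidean space `ℝ^{N+1}`. -/
def stdSimp (N : ℕ) : Set (EuclideanSpace ℝ (Fin (N + 1))) :=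
  {x | (∀ i, 0 ≤ x i) ∧ ∑ i, x i = 1}

/-- The face of the standard simplex spanned by the vertex set `S`. -/
def simpFace (N : ℕ) (S : Finset (Fin (N + 1))) : Set (EuclideanSpace ℝ (Fin (N + 1))) :=
  {x ∈ stdSimp N | ∀ i, x i ≠ 0 → i ∈ S}

open Function (support)

/-!
Write `q` for the map to be studied and `G = (ℤ/p)^e`, so that `r = p ^ e = |G|`. Adding the
elementary symmetric polynomial of degree `k + 2` as one more coordinate reduces the theorem to the
topological Tverberg theorem for `r` points: on nonnegative vectors this polynomial vanishes exactly
when the support has at most `k + 1` elements, and among `r` disjoint supports in `N + 1` vertices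
one is that small, hence all are.

For Tverberg's theorem, extend `q` homogeneously and adjoin the total weight as a coordinate. This
gives `G`-equivariant maps from the deleted join of the simplex to copies of the regular
representation `ℝ[G]`, and one needs a point at which all of them are constant on `G`. By
injectivity of the Radon transform of `G` modulo constants, it is enough that the sums over parallel
hyperplanes of `G` agree. Label each point and each functional by the position of the largest such
sum. By compactness it suffices to find arbitrarily small simplices whose vertices carry all labels
in `ℤ/p` for every functional.

If there were none, a cocycle on labelled simplices, the cup product over all functionals of cyclic
counterparts of the Euler class, would vanish on fine subdivisions of the deleted join. Its value on
chains is the same for all families resolving the tensor product of the periodic resolutions of the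
factors `ℤ/p`. The subdivided deleted join provides one such family, and on the one obtained by
iterated cones in the label space the value is a product of Vandermonde-type determinants, which is
nonzero modulo `p`.
-/

namespace VanKampenFlores

/-! ### Ordered chains and cochains -/

section Chains

variable {K U V W : Type*} [CommRing K]

/-- Ordered chains on the vertex set `V`. A list with `n + 1` entries (repetitions allowed) is an
ordered `n`-simplex and `[]` is the augmentation simplex, so that all degrees, including `-1`, live
in one module. -/
abbrev OrderedChain (K V : Type*) [CommRing K] := List V →₀ K

/-- The cone with apex `v`: prepend the vertex `v` to every simplex. -/
def cone (v : V) : OrderedChain K V →ₗ[K] OrderedChain K V := Finsupp.lmapDomain K K (List.cons v)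

/-- The augmented boundary of a single ordered simplex. -/
def simplexBoundary : List V → OrderedChain K V
  | [] => 0
  | v :: t => Finsupp.single t 1 - cone v (simplexBoundary t)

/-- The augmented boundary operator on ordered chains. -/
def boundary : OrderedChain K V →ₗ[K] OrderedChain K V :=
  Finsupp.linearCombination K simplexBoundary

/-- The chain map induced by a map of vertices. -/
def chainMap (f : V → W) : OrderedChain K V →ₗ[K] OrderedChain K W :=
  Finsupp.lmapDomain K K (List.map f)

/-- The evaluation of a cochain `φ` on chains. -/
def eval (φ : List V → K) : OrderedChain K V →ₗ[K] K := Finsupp.linearCombination K φ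

/-- The augmented coboundary of a cochain. -/
def coboundary (φ : List V → K) (t : List V) : K := eval φ (simplexBoundary t)

@[simp] lemma cone_single (v : V) (t : List V) (a : K) :
    cone v (Finsupp.single t a) = Finsupp.single (v :: t) a :=
  Finsupp.mapDomain_single

@[simp] lemma boundary_single (t : List V) (a : K) :
    boundary (Finsupp.single t a) = a • simplexBoundary t := by
  simp [boundary]

@[simp] lemma chainMap_single (f : V → W) (t : List V) (a : K) :
    chainMap f (Finsupp.single t a) = Finsupp.single (t.map f) a :=
  Finsupp.mapDomain_single

@[simp] lemma eval_single (φ : List V → K) (t : List V) (a : K) :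
    eval φ (Finsupp.single t a) = a * φ t := by
  simp [eval]

lemma boundary_cone (v : V) (c : OrderedChain K V) :
    boundary (cone v c) = c - cone v (boundary c) := by
  have h : boundary ∘ₗ cone v = LinearMap.id - cone (K := K) v ∘ₗ boundary :=
    Finsupp.lhom_ext fun t a => by simp [simplexBoundary, smul_sub]
  exact DFunLike.congr_fun h c

lemma chainMap_cone (f : V → W) (v : V) (c : OrderedChain K V) :
    chainMap f (cone v c) = cone (f v) (chainMap f c) := by
  have h : chainMap f ∘ₗ cone v = cone (K := K) (f v) ∘ₗ chainMap f :=
    Finsupp.lhom_ext fun t a => by simp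
  exact DFunLike.congr_fun h c

lemma boundary_simplexBoundary (t : List V) :
    boundary (simplexBoundary t : OrderedChain K V) = 0 := by
  induction t with
  | nil => simp [simplexBoundary]
  | cons v t ih => simp [simplexBoundary, boundary_cone, ih]

lemma chainMap_simplexBoundary (f : V → W) (t : List V) :
    chainMap f (simplexBoundary t : OrderedChain K V) = simplexBoundary (t.map f) := by
  induction t with
  | nil => simp [simplexBoundary]
  | cons v t ih => simp [simplexBoundary, chainMap_cone, ih]

lemma chainMap_boundary (f : V → W) (c : OrderedChain K V) :
    chainMap f (boundary c) = boundary (chainMap f c) := by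
  have h : chainMap f ∘ₗ boundary = boundary (K := K) ∘ₗ chainMap f :=
    Finsupp.lhom_ext fun t a => by simp [chainMap_simplexBoundary]
  exact DFunLike.congr_fun h c

lemma chainMap_chainMap (g : W → U) (f : V → W) (c : OrderedChain K V) :
    chainMap g (chainMap f c) = chainMap (g ∘ f) c := by
  have h : chainMap g ∘ₗ chainMap f = chainMap (K := K) (g ∘ f) :=
    Finsupp.lhom_ext fun t a => by simp
  exact DFunLike.congr_fun h c

lemma chainMap_id : (chainMap id : Module.End K (OrderedChain K V)) = 1 :=
  Finsupp.lhom_ext fun t a => by simp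

lemma chainMap_pow (f : V → V) (i : ℕ) :
    (chainMap f : Module.End K (OrderedChain K V)) ^ i = chainMap f^[i] := by
  induction i with
  | zero => exact chainMap_id.symm
  | succ i ih =>
    rw [pow_succ, ih, Function.iterate_succ]
    exact LinearMap.ext fun c => chainMap_chainMap _ _ c

lemma eval_zero (c : OrderedChain K V) : eval (fun _ => (0 : K)) c = 0 := by
  simp [eval, Finsupp.linearCombination_apply]

lemma eval_cone (φ : List V → K) (v : V) (c : OrderedChain K V) :
    eval φ (cone v c) = eval (fun t => φ (v :: t)) c :=
  Finsupp.linearCombination_mapDomain K (List.cons v) c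

lemma eval_chainMap (φ : List W → K) (f : V → W) (c : OrderedChain K V) :
    eval φ (chainMap f c) = eval (fun t => φ (t.map f)) c :=
  Finsupp.linearCombination_mapDomain K (List.map f) c

lemma eval_boundary (φ : List V → K) (c : OrderedChain K V) :
    eval φ (boundary c) = eval (coboundary φ) c := by
  have h : eval φ ∘ₗ boundary = eval (coboundary φ) :=
    Finsupp.lhom_ext fun t a => by simp [coboundary]
  exact DFunLike.congr_fun h c

@[simp] lemma coboundary_nil (φ : List V → K) : coboundary φ [] = 0 := by
  simp [coboundary, simplexBoundary]

lemma coboundary_cons (φ : List V → K) (v : V) (t : List V) :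
    coboundary φ (v :: t) = φ t - coboundary (fun s => φ (v :: s)) t := by
  simp [coboundary, simplexBoundary, eval_cone]

lemma coboundary_const_mul (a : K) (φ : List V → K) (t : List V) :
    coboundary (fun s => a * φ s) t = a * coboundary φ t := by
  induction t generalizing φ with
  | nil => simp
  | cons v t ih => rw [coboundary_cons, coboundary_cons, ih, mul_sub]

lemma coboundary_comp_map (f : V → W) (φ : List W → K) (t : List V) :
    coboundary (fun s => φ (s.map f)) t = coboundary φ (t.map f) := by
  rw [coboundary, coboundary, ← chainMap_simplexBoundary, eval_chainMap]

lemma coboundary_eq_zero_of_forall_length (φ : List V → K) (t : List V)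
    (h : ∀ s, s.length + 1 = t.length → φ s = 0) : coboundary φ t = 0 := by
  induction t generalizing φ with
  | nil => simp
  | cons v t ih =>
    rw [coboundary_cons, h t rfl, ih _ fun s hs => h (v :: s) (by simpa using hs), sub_zero]

lemma coboundary_ofFn (n : ℕ) (φ : List V → K) (v : Fin (n + 1) → V) :
    coboundary φ (List.ofFn v) =
      ∑ i : Fin (n + 1), (-1) ^ (i : ℕ) * φ (List.ofFn (v ∘ i.succAbove)) := by
  induction n generalizing φ with
  | zero => simp [coboundary_cons]
  | succ n ih =>
    rw [Fin.sum_univ_succ, List.ofFn_succ, coboundary_cons, ih, sub_eq_add_neg,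
      ← Finset.sum_neg_distrib]
    congr 1
    · simp [Function.comp_def]
    · refine Finset.sum_congr rfl fun i _ => ?_
      have hface : List.ofFn (v ∘ (Fin.succ i).succAbove) =
          v 0 :: List.ofFn ((fun j : Fin (n + 1) => v j.succ) ∘ i.succAbove) := by
        rw [List.ofFn_succ]
        simp [Function.comp_def]
      rw [hface]
      simp [pow_succ]

/-- The cup product of a cochain `α` of degree `q` with a cochain `β`: the front `q`-face is fed
to `α`, the back face, which shares one vertex with it, to `β`. -/
def cup (q : ℕ) (α β : List V → K) (t : List V) : K :=
  if q < t.length then α (t.take (q + 1)) * β (t.drop q) else 0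

@[simp] lemma cup_nil (q : ℕ) (α β : List V → K) : cup q α β [] = 0 := by simp [cup]

@[simp] lemma cup_zero_cons (α β : List V → K) (v : V) (t : List V) :
    cup 0 α β (v :: t) = α [v] * β (v :: t) := by simp [cup]

@[simp] lemma cup_succ_cons (q : ℕ) (α β : List V → K) (v : V) (t : List V) :
    cup (q + 1) α β (v :: t) = cup q (fun s => α (v :: s)) β t := by simp [cup]

lemma cup_sub_left (q : ℕ) (α α' β : List V → K) (t : List V) :
    cup q (fun s => α s - α' s) β t = cup q α β t - cup q α' β t := by
  unfold cup
  split_ifs <;> ring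

@[simp] lemma cup_zero_right (q : ℕ) (α : List V → K) (t : List V) :
    cup q α (fun _ => 0) t = 0 := by simp [cup]

lemma cup_congr_left (q : ℕ) {α α' : List V → K} (β : List V → K) (t : List V)
    (h : ∀ s, s.length = q + 1 → α s = α' s) : cup q α β t = cup q α' β t := by
  unfold cup
  split_ifs with hq
  · rw [h _ (by rw [List.length_take]; omega)]
  · rfl

lemma cup_eq_zero_of_left (q : ℕ) {α : List V → K} (β : List V → K) (t : List V)
    (h : ∀ s, s.length = q + 1 → α s = 0) : cup q α β t = 0 := by
  rw [cup_congr_left (α' := fun _ => 0) q β t h]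
  simp [cup]

lemma cup_map (q : ℕ) (f : V → W) (α β : List W → K) (t : List V) :
    cup q α β (t.map f) = cup q (fun s => α (s.map f)) (fun s => β (s.map f)) t := by
  simp [cup, List.map_take, List.map_drop]

lemma exists_sublist_of_cup_ne_zero {q : ℕ} {α β : List V → K} {t : List V}
    (h : cup q α β t ≠ 0) :
    (∃ s, s.Sublist t ∧ s.length = q + 1 ∧ α s ≠ 0) ∧ ∃ s, s.Sublist t ∧ β s ≠ 0 := by
  unfold cup at h
  split_ifs at h with hq
  · exact ⟨⟨_, List.take_sublist _ _, by rw [List.length_take]; omega, left_ne_zero_of_mul h⟩,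
      ⟨_, List.drop_sublist _ _, right_ne_zero_of_mul h⟩⟩
  · exact absurd rfl h

/-- The Leibniz rule. Since cochains are augmented, `β` must not charge the empty simplex. -/
lemma coboundary_cup (q : ℕ) (α β : List V → K) (hβ : β [] = 0) (t : List V) :
    coboundary (cup q α β) t =
      cup (q + 1) (coboundary α) β t + (-1) ^ q * cup q α (coboundary β) t := by
  induction t generalizing q α with
  | nil => simp
  | cons v t ih =>
    cases q with
    | zero =>
      simp only [coboundary_cons, cup_zero_cons, coboundary_const_mul, cup_succ_cons]
      cases t with
      | nil => simp [hβ]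
      | cons u t =>
        simp only [cup_zero_cons, coboundary_cons, coboundary_nil]
        ring
    | succ q =>
      simp only [coboundary_cons, cup_succ_cons, cup_sub_left, ih]
      ring

end Chains

/-! ### Differentials on families indexed by multidegrees -/

section Multidegree

variable {K C D κ : Type*} [CommRing K] [AddCommGroup C] [Module K C] [AddCommGroup D] [Module K D]
  [LinearOrder κ]

/-- The multidegree `n` with its `k`-th entry lowered by one (unchanged if that entry is `0`). -/
def lower (n : κ → ℕ) (k : κ) : κ → ℕ := Function.update n k (n k - 1)

@[simp] lemma lower_self (n : κ → ℕ) (k : κ) : lower n k k = n k - 1 := by simp [lower]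

lemma lower_of_ne (n : κ → ℕ) {k l : κ} (h : l ≠ k) : lower n k l = n l := by simp [lower, h]

lemma lower_comm (n : κ → ℕ) {k l : κ} (h : k ≠ l) :
    lower (lower n k) l = lower (lower n l) k := by
  simp only [lower, Function.update_of_ne h, Function.update_of_ne h.symm]
  rw [Function.update_comm h]

lemma lower_add_single (n : κ → ℕ) (k : κ) (m : ℕ) :
    lower (n + Pi.single k (m + 1)) k = n + Pi.single k m := by
  funext j
  obtain rfl | hj := eq_or_ne j k
  · simp
  · simp [lower_of_ne _ hj, hj]

variable [Fintype κ]

lemma sum_filter_lower_add_one (n : κ → ℕ) {k : κ} (hn : n k ≠ 0) (P : κ → Prop) [DecidablePred P]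
    (hk : P k) : ∑ j with P j, lower n k j + 1 = ∑ j with P j, n j := by
  have hmem : k ∈ Finset.univ.filter P := by simpa using hk
  rw [← Finset.add_sum_erase _ _ hmem, ← Finset.add_sum_erase _ n hmem, lower_self,
    Finset.sum_congr rfl fun j hj => lower_of_ne n (Finset.ne_of_mem_erase hj)]
  omega

lemma sum_lower_add_one (n : κ → ℕ) {k : κ} (hn : n k ≠ 0) : ∑ j, lower n k j + 1 = ∑ j, n j := by
  simpa using sum_filter_lower_add_one n hn (fun _ => True) trivial

lemma sum_lower_lt (n : κ → ℕ) {k : κ} (hn : n k ≠ 0) : ∑ j, lower n k j < ∑ j, n j := by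
  have := sum_lower_add_one n hn
  omega

/-- The Koszul sign for moving an operator of index `k` past the tensor factors of index `< k`, in
multidegree `n`. -/
def koszulSign (K : Type*) [CommRing K] (n : κ → ℕ) (k : κ) : K := (-1) ^ (∑ j with j < k, n j)

lemma isUnit_koszulSign (n : κ → ℕ) (k : κ) : IsUnit (koszulSign K n k) :=
  (isUnit_one.neg).pow _

lemma koszulSign_lower_of_le (n : κ → ℕ) {k l : κ} (h : l ≤ k) :
    koszulSign K (lower n k) l = koszulSign K n l := by
  unfold koszulSign
  congr 1
  exact Finset.sum_congr rfl fun j hj =>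
    lower_of_ne n ((Finset.mem_filter.1 hj).2.trans_le h).ne

lemma koszulSign_lower_of_lt (n : κ → ℕ) {k l : κ} (h : k < l) (hn : n k ≠ 0) :
    koszulSign K (lower n k) l = -koszulSign K n l := by
  rw [koszulSign, koszulSign, ← sum_filter_lower_add_one n hn (· < l) h, pow_succ]
  simp

/-- The `k`-th partial differential of a tensor product of complexes with one generator in each
degree, acting on families of values on the generators. Here `X k m` is the coefficient of the
differential of the `k`-th factor from degree `m` to degree `m - 1`. -/
def partialDiff (X : κ → ℕ → Module.End K C) (k : κ) : Module.End K ((κ → ℕ) → C) :=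
  LinearMap.pi fun n =>
    if n k = 0 then 0 else koszulSign K n k • X k (n k) ∘ₗ LinearMap.proj (lower n k)

/-- The total differential of a tensor product of complexes with one generator in each degree,
acting on families of values on the generators. -/
def totalDiff (X : κ → ℕ → Module.End K C) : Module.End K ((κ → ℕ) → C) := ∑ k, partialDiff X k

lemma partialDiff_apply (X : κ → ℕ → Module.End K C) (k : κ) (a : (κ → ℕ) → C) (n : κ → ℕ) :
    partialDiff X k a n =
      if n k = 0 then 0 else koszulSign K n k • X k (n k) (a (lower n k)) := by
  rw [partialDiff, LinearMap.pi_apply]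
  split_ifs <;> simp

lemma totalDiff_apply (X : κ → ℕ → Module.End K C) (a : (κ → ℕ) → C) (n : κ → ℕ) :
    totalDiff X a n = ∑ k, partialDiff X k a n := by
  simp [totalDiff]

lemma totalDiff_zero_apply (X : κ → ℕ → Module.End K C) (a : (κ → ℕ) → C) :
    totalDiff X a 0 = 0 := by
  simp [totalDiff_apply, partialDiff_apply]

lemma partialDiff_mul_self (X : κ → ℕ → Module.End K C)
    (hsq : ∀ k m, X k (m + 1) * X k m = 0) (k : κ) : partialDiff X k * partialDiff X k = 0 := by
  ext1 a
  funext n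
  rw [Module.End.mul_apply, partialDiff_apply, partialDiff_apply, lower_self]
  split_ifs with h h'
  · simp
  · simp
  · have hX := DFunLike.congr_fun (hsq k (n k - 1)) (a (lower (lower n k) k))
    rw [Nat.sub_add_cancel (Nat.pos_of_ne_zero h), Module.End.mul_apply] at hX
    rw [map_smul, hX]
    simp

lemma partialDiff_anticomm (X : κ → ℕ → Module.End K C)
    (hcomm : ∀ k l, k ≠ l → ∀ m m', Commute (X k m) (X l m')) {k l : κ} (hkl : k < l) :
    partialDiff X k * partialDiff X l + partialDiff X l * partialDiff X k = 0 := by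
  ext1 a
  funext n
  simp only [LinearMap.add_apply, LinearMap.zero_apply, Module.End.mul_apply, Pi.add_apply,
    Pi.zero_apply, partialDiff_apply, lower_of_ne n hkl.ne, lower_of_ne n hkl.ne',
    lower_comm n hkl.ne, koszulSign_lower_of_le n hkl.le]
  split_ifs with hk hl hl
  · simp
  · simp
  · simp
  · have hX := DFunLike.congr_fun (hcomm k l hkl.ne (n k) (n l)) (a (lower (lower n l) k))
    rw [Module.End.mul_apply, Module.End.mul_apply] at hX
    rw [koszulSign_lower_of_lt n hkl hk, map_smul, map_smul, hX]
    module

lemma sum_mul_sum_eq_zero_of_anticomm {R : Type*} [NonUnitalNonAssocRing R] (x : κ → R)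
    (hsq : ∀ k, x k * x k = 0) (hanti : ∀ k l, k < l → x k * x l + x l * x k = 0) :
    (∑ k, x k) * ∑ k, x k = 0 := by
  rw [Finset.sum_mul_sum, ← Finset.sum_product']
  refine Finset.sum_involution (fun q _ => q.swap) ?_ ?_ (by simp) (by simp)
  · rintro ⟨k, l⟩ -
    obtain h | rfl | h := lt_trichotomy k l
    · exact hanti k l h
    · simp [hsq]
    · rw [add_comm]
      exact hanti l k h
  · rintro ⟨k, l⟩ - hne heq
    simp only [Prod.swap_prod_mk, Prod.mk.injEq] at heq
    obtain ⟨rfl, -⟩ := heq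
    exact hne (hsq l)

lemma totalDiff_totalDiff (X : κ → ℕ → Module.End K C)
    (hsq : ∀ k m, X k (m + 1) * X k m = 0)
    (hcomm : ∀ k l, k ≠ l → ∀ m m', Commute (X k m) (X l m')) (a : (κ → ℕ) → C) :
    totalDiff X (totalDiff X a) = 0 :=
  DFunLike.congr_fun (sum_mul_sum_eq_zero_of_anticomm (partialDiff X) (partialDiff_mul_self X hsq)
    fun _ _ h => partialDiff_anticomm X hcomm h) a

lemma totalDiff_congr (X : κ → ℕ → Module.End K C) {a b : (κ → ℕ) → C} {n : κ → ℕ}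
    (h : ∀ m : κ → ℕ, ∑ j, m j < ∑ j, n j → a m = b m) : totalDiff X a n = totalDiff X b n := by
  rw [totalDiff_apply, totalDiff_apply]
  refine Finset.sum_congr rfl fun k _ => ?_
  rw [partialDiff_apply, partialDiff_apply]
  split_ifs with hk
  · rfl
  · rw [h _ (sum_lower_lt n hk)]

lemma map_totalDiff (X : κ → ℕ → Module.End K C) (Y : κ → ℕ → Module.End K D) (Φ : C →ₗ[K] D)
    (h : ∀ k m c, Φ (X k m c) = Y k m (Φ c)) (a : (κ → ℕ) → C) (n : κ → ℕ) :
    Φ (totalDiff X a n) = totalDiff Y (fun m => Φ (a m)) n := by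
  simp only [totalDiff_apply, partialDiff_apply, map_sum]
  exact Finset.sum_congr rfl fun k _ => by split_ifs <;> simp [h]

lemma exists_forall_eq_totalDiff (X : κ → ℕ → Module.End K C) (F : (κ → ℕ) → C → C) :
    ∃ a : (κ → ℕ) → C, ∀ n, a n = F n (totalDiff X a n) := by
  let hwf := (measure fun n : κ → ℕ => ∑ j, n j).wf
  let step (n : κ → ℕ) (rec : ∀ m : κ → ℕ, ∑ j, m j < ∑ j, n j → C) : C :=
    F n (totalDiff X (fun m => if h : ∑ j, m j < ∑ j, n j then rec m h else 0) n)
  refine ⟨hwf.fix step, fun n => ?_⟩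
  rw [hwf.fix_eq]
  exact congrArg (F n) (totalDiff_congr X fun m hm => dif_pos hm)

end Multidegree

/-! ### Images of the resolution of `(ℤ/p)^κ` -/

section PeriodicCoefficients

variable {R : Type*} [Ring R] {K C D : Type*} [CommRing K] [AddCommGroup C] [Module K C]
  [AddCommGroup D] [Module K D]

/-- The coefficients of the periodic resolution of the cyclic group of order `q` generated by `A`:
`A - 1` in odd degrees and the norm element in even degrees. -/
def periodicCoeff (q m : ℕ) (A : R) : R :=
  if Odd m then A - 1 else ∑ i ∈ Finset.range q, A ^ i

lemma periodicCoeff_succ_mul (q m : ℕ) {A : R} (hA : A ^ q = 1) :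
    periodicCoeff q (m + 1) A * periodicCoeff q m A = 0 := by
  unfold periodicCoeff
  obtain h | h := Nat.even_or_odd m
  · rw [if_pos h.add_one, if_neg (by simpa using h), mul_geom_sum, hA, sub_self]
  · rw [if_neg (by simpa using h.add_one), if_pos h, geom_sum_mul, hA, sub_self]

lemma commute_periodicCoeff (q m m' : ℕ) {A B : R} (h : Commute A B) :
    Commute (periodicCoeff q m A) (periodicCoeff q m' B) := by
  have key : ∀ (n : ℕ) {X Y : R}, Commute X Y → Commute X (periodicCoeff q n Y) := by
    intro n X Y hXY
    unfold periodicCoeff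
    split_ifs
    · exact hXY.sub_right (Commute.one_right _)
    · exact Commute.sum_right _ _ _ fun i _ => hXY.pow_right i
  exact key m' (key m h.symm).symm

lemma periodicCoeff_one (q m : ℕ) (hq : (q : R) = 0) : periodicCoeff q m (1 : R) = 0 := by
  simp [periodicCoeff, hq]

lemma periodicCoeff_apply_of_odd (q : ℕ) {m : ℕ} (hm : Odd m) (A : Module.End K C) (c : C) :
    periodicCoeff q m A c = A c - c := by
  simp [periodicCoeff, hm]

lemma periodicCoeff_apply_of_even (q : ℕ) {m : ℕ} (hm : Even m) (A : Module.End K C) (c : C) :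
    periodicCoeff q m A c = ∑ i ∈ Finset.range q, (A ^ i) c := by
  simp [periodicCoeff, Nat.not_odd_iff_even.2 hm]

lemma map_periodicCoeff (q m : ℕ) {A : Module.End K C} {B : Module.End K D} (Φ : C →ₗ[K] D)
    (h : ∀ c, Φ (A c) = B (Φ c)) (c : C) :
    Φ (periodicCoeff q m A c) = periodicCoeff q m B (Φ c) := by
  obtain hm | hm := Nat.even_or_odd m
  · simp only [periodicCoeff_apply_of_even q hm, map_sum, Module.End.pow_apply]
    exact Finset.sum_congr rfl fun i _ =>
      (Function.Semiconj.iterate_right (f := Φ) (ga := A) (gb := B) h i) c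
  · rw [periodicCoeff_apply_of_odd q hm, periodicCoeff_apply_of_odd q hm, map_sub, h]

lemma map_periodicCoeff_eq_zero (q m : ℕ) [CharP K q] {A : Module.End K C} (φ : C →ₗ[K] K)
    (h : ∀ c, φ (A c) = φ c) (c : C) : φ (periodicCoeff q m A c) = 0 := by
  have hq : ((q : ℕ) : Module.End K K) = 0 := by
    ext
    simp
  rw [map_periodicCoeff (B := 1) q m φ h, periodicCoeff_one q m hq, LinearMap.zero_apply]

lemma periodicCoeff_apply_eq_zero (q m : ℕ) [CharP K q] {A : Module.End K C} {c : C}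
    (h : A c = c) : periodicCoeff q m A c = 0 := by
  have hq : ((q : ℕ) : Module.End K K) = 0 := by
    ext
    simp
  have := map_periodicCoeff (A := 1) (B := A) q m (LinearMap.toSpanSingleton K C c)
    (fun x => by simp [h]) 1
  simpa [periodicCoeff_one q m hq] using this.symm

lemma periodicCoeff_apply_mem (q m : ℕ) {A : Module.End K C} {N : Submodule K C}
    (h : ∀ c ∈ N, A c ∈ N) {c : C} (hc : c ∈ N) : periodicCoeff q m A c ∈ N := by
  have := map_periodicCoeff (A := A.restrict h) (B := A) q m N.subtype (fun _ => rfl) ⟨c, hc⟩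
  exact this ▸ Subtype.property _

end PeriodicCoefficients

section ResolutionFamilies

variable {K V W κ : Type*} [CommRing K]

/-- The resolution coefficients of the maps `T k`, acting on ordered chains. -/
def resOp (p : ℕ) (T : κ → V → V) (k : κ) (m : ℕ) : Module.End K (OrderedChain K V) :=
  periodicCoeff p m (chainMap (T k))

/-- The augmentation of a resolution: the empty simplex in multidegree zero. -/
def augmentation [DecidableEq (κ → ℕ)] : (κ → ℕ) → OrderedChain K V :=
  Pi.single 0 (Finsupp.single [] 1)

lemma map_resOp (p : ℕ) {T : κ → V → V} {T' : κ → W → W}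
    (Φ : OrderedChain K V →ₗ[K] OrderedChain K W)
    (h : ∀ k c, Φ (chainMap (T k) c) = chainMap (T' k) (Φ c)) (k : κ) (m : ℕ)
    (c : OrderedChain K V) : Φ (resOp p T k m c) = resOp p T' k m (Φ c) :=
  map_periodicCoeff p m Φ (h k) c

lemma resOp_succ_mul {p : ℕ} {T : κ → V → V} (hT : ∀ k, (T k)^[p] = id) (k : κ) (m : ℕ) :
    (resOp p T k (m + 1) * resOp p T k m : Module.End K (OrderedChain K V)) = 0 :=
  periodicCoeff_succ_mul p m (by rw [chainMap_pow, hT, chainMap_id])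

lemma commute_resOp (p : ℕ) {T : κ → V → V} (hcomm : ∀ k l, Function.Commute (T k) (T l))
    (k l : κ) (m m' : ℕ) :
    Commute (resOp p T k m : Module.End K (OrderedChain K V)) (resOp p T l m') :=
  commute_periodicCoeff p m m' <| LinearMap.ext fun c => by
    rw [Module.End.mul_apply, Module.End.mul_apply, chainMap_chainMap, chainMap_chainMap,
      (hcomm k l).comp_eq]

lemma boundary_augmentation [DecidableEq (κ → ℕ)] (n : κ → ℕ) :
    boundary (augmentation n : OrderedChain K V) = 0 := by
  obtain rfl | hn := eq_or_ne n 0 <;> simp [augmentation, simplexBoundary, *]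

variable [LinearOrder κ] [Fintype κ]

lemma totalDiff_augmentation (p : ℕ) [CharP K p] (T : κ → V → V) :
    totalDiff (resOp p T) (augmentation : _ → OrderedChain K V) = 0 := by
  funext n
  rw [totalDiff_apply]
  refine Finset.sum_eq_zero fun k _ => ?_
  have h : resOp p T k (n k) (augmentation (lower n k) : OrderedChain K V) = 0 :=
    periodicCoeff_apply_eq_zero p _ (by
      obtain hn | hn := eq_or_ne (lower n k) 0 <;> simp [augmentation, hn])
  rw [partialDiff_apply, h, smul_zero, ite_self]

lemma boundary_totalDiff (p : ℕ) (T : κ → V → V) (a : (κ → ℕ) → OrderedChain K V) (n : κ → ℕ) :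
    boundary (totalDiff (resOp p T) a n) = totalDiff (resOp p T) (fun m => boundary (a m)) n :=
  map_totalDiff _ _ _ (map_resOp p boundary fun k c => (chainMap_boundary (T k) c).symm) a n

/-- The image of the generators of the product resolution of `(ℤ/p)^κ` under an
augmentation-preserving equivariant chain map, where the generators act by the maps `T k`. -/
def IsResolutionFamily (p : ℕ) (T : κ → V → V) (a : (κ → ℕ) → OrderedChain K V) : Prop :=
  ∀ n, boundary (a n) = totalDiff (resOp p T) a n + augmentation n

/-- The resolution family obtained by successively coning off with the apices `v n`. -/
def IsConedFamily (p : ℕ) (T : κ → V → V) (v : (κ → ℕ) → V) (a : (κ → ℕ) → OrderedChain K V) :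
    Prop :=
  ∀ n, a n = cone (v n) (totalDiff (resOp p T) a n + augmentation n)

lemma exists_isConedFamily (p : ℕ) (T : κ → V → V) (v : (κ → ℕ) → V) :
    ∃ a : (κ → ℕ) → OrderedChain K V, IsConedFamily p T v a :=
  exists_forall_eq_totalDiff (K := K) (C := OrderedChain K V) (resOp p T)
    fun n z => cone (v n) (z + augmentation n)

lemma IsConedFamily.apply_zero {p : ℕ} {T : κ → V → V} {v : (κ → ℕ) → V}
    {a : (κ → ℕ) → OrderedChain K V} (ha : IsConedFamily p T v a) :
    a 0 = Finsupp.single [v 0] 1 := by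
  rw [ha, totalDiff_zero_apply, zero_add, augmentation, Pi.single_eq_same, cone_single]

lemma IsConedFamily.apply_of_ne_zero {p : ℕ} {T : κ → V → V} {v : (κ → ℕ) → V}
    {a : (κ → ℕ) → OrderedChain K V} (ha : IsConedFamily p T v a) {n : κ → ℕ} (hn : n ≠ 0) :
    a n = cone (v n) (totalDiff (resOp p T) a n) := by
  rw [ha, augmentation, Pi.single_eq_of_ne hn, add_zero]

section

variable {p : ℕ} {T : κ → V → V} (hT : ∀ k, (T k)^[p] = id)
  (hcomm : ∀ k l, Function.Commute (T k) (T l))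

include hT hcomm

lemma totalDiff_resOp_totalDiff (a : (κ → ℕ) → OrderedChain K V) :
    totalDiff (resOp p T) (totalDiff (resOp p T) a) = 0 :=
  totalDiff_totalDiff _ (resOp_succ_mul hT) (fun k l _ => commute_resOp p hcomm k l) a

lemma IsConedFamily.isResolutionFamily [CharP K p] {v : (κ → ℕ) → V}
    {a : (κ → ℕ) → OrderedChain K V} (ha : IsConedFamily p T v a) : IsResolutionFamily p T a := by
  intro n
  induction hs : ∑ j, n j using Nat.strong_induction_on generalizing n with
  | _ s ih =>
    have hlower : totalDiff (resOp p T) (fun m => boundary (a m)) n =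
        totalDiff (resOp p T) (totalDiff (resOp p T) a + augmentation) n :=
      totalDiff_congr _ fun m hm => ih _ (hs ▸ hm) m rfl
    have hcycle : boundary (totalDiff (resOp p T) a n + augmentation n) = 0 := by
      rw [map_add, boundary_augmentation, boundary_totalDiff, hlower, map_add,
        totalDiff_resOp_totalDiff hT hcomm, totalDiff_augmentation]
      simp
    conv_lhs => rw [ha n]
    rw [boundary_cone, hcycle, map_zero, sub_zero]

/-- Coning off provides the homotopy, since ordered chains are acyclic. -/
lemma IsResolutionFamily.exists_homotopy [Nonempty V] {a b : (κ → ℕ) → OrderedChain K V}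
    (ha : IsResolutionFamily p T a) (hb : IsResolutionFamily p T b) :
    ∃ h : (κ → ℕ) → OrderedChain K V,
      ∀ n, boundary (h n) = a n - b n - totalDiff (resOp p T) h n := by
  obtain ⟨v⟩ := ‹Nonempty V›
  obtain ⟨h, hh⟩ := exists_forall_eq_totalDiff (resOp p T) fun n z => cone v (a n - b n - z)
  refine ⟨h, fun n => ?_⟩
  induction hs : ∑ j, n j using Nat.strong_induction_on generalizing n with
  | _ s ih =>
    have hlower : totalDiff (resOp p T) (fun m => boundary (h m)) n =
        totalDiff (resOp p T) (a - b - totalDiff (resOp p T) h) n :=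
      totalDiff_congr _ fun m hm => ih _ (hs ▸ hm) m rfl
    have hcycle : boundary (a n - b n - totalDiff (resOp p T) h n) = 0 := by
      rw [map_sub, map_sub, ha, hb, boundary_totalDiff, hlower, map_sub, map_sub,
        totalDiff_resOp_totalDiff hT hcomm]
      simp
    conv_lhs => rw [hh n]
    rw [boundary_cone, hcycle, map_zero, sub_zero]

lemma IsResolutionFamily.eval_eq [CharP K p] [Nonempty V] {a b : (κ → ℕ) → OrderedChain K V}
    (ha : IsResolutionFamily p T a) (hb : IsResolutionFamily p T b) {φ : List V → K}
    (hφ : ∀ t, coboundary φ t = 0) (hinv : ∀ k t, φ (t.map (T k)) = φ t) (n : κ → ℕ) :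
    eval φ (a n) = eval φ (b n) := by
  obtain ⟨h, hh⟩ := ha.exists_homotopy hT hcomm hb
  have hexact : eval φ (boundary (h n)) = 0 := by
    rw [eval_boundary, funext hφ, eval_zero]
  have hnorm : eval φ (totalDiff (resOp p T) h n) = 0 := by
    rw [totalDiff_apply, map_sum]
    refine Finset.sum_eq_zero fun k _ => ?_
    have hk : eval φ (resOp p T k (n k) (h (lower n k))) = 0 :=
      map_periodicCoeff_eq_zero p _ _ (fun c => by rw [eval_chainMap, funext (hinv k)]) _
    rw [partialDiff_apply]
    split_ifs
    · simp
    · rw [map_smul, hk, smul_zero]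
  rwa [hh, map_sub, map_sub, hnorm, sub_zero, sub_eq_zero] at hexact

end

lemma IsResolutionFamily.map {p : ℕ} {T : κ → V → V} {T' : κ → W → W}
    (Φ : OrderedChain K V →ₗ[K] OrderedChain K W)
    (hΦ : ∀ k c, Φ (chainMap (T k) c) = chainMap (T' k) (Φ c))
    (hboundary : ∀ c, Φ (boundary c) = boundary (Φ c))
    (hnil : Φ (Finsupp.single [] 1) = Finsupp.single [] 1) {a : (κ → ℕ) → OrderedChain K V}
    (ha : IsResolutionFamily p T a) : IsResolutionFamily p T' fun n => Φ (a n) := by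
  intro n
  rw [← hboundary, ha n, map_add, map_totalDiff _ _ Φ (map_resOp p Φ hΦ)]
  congr 1
  obtain rfl | hn := eq_or_ne n 0 <;> simp [augmentation, *]

end ResolutionFamilies

/-! ### The Vandermonde cocycle -/

section Vandermonde

variable {K : Type*} [CommRing K]

/-- The Vandermonde product `∏_{i<j} (t_j - t_i)` of a list. -/
def vandermonde : List K → K
  | [] => 1
  | a :: t => (t.map fun b => b - a).prod * vandermonde t

lemma vandermonde_ofFn (n : ℕ) (v : Fin n → K) :
    vandermonde (List.ofFn v) = (Matrix.vandermonde v).det := by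
  induction n with
  | zero => simp [vandermonde]
  | succ n ih =>
    rw [List.ofFn_succ, vandermonde, ih, Matrix.det_vandermonde, Matrix.det_vandermonde,
      Fin.prod_univ_succ, Fin.prod_Ioi_zero, List.map_ofFn, List.prod_ofFn]
    congr 1
    exact Finset.prod_congr rfl fun i _ => by rw [Fin.prod_Ioi_succ]

/-- The alternating sum is the Laplace expansion of a determinant with two equal columns. -/
lemma coboundary_vandermonde (t : List K) (ht : 2 ≤ t.length) : coboundary vandermonde t = 0 := by
  cases t using List.ofFnRec with | _ n v
  rw [List.length_ofFn] at ht
  obtain ⟨n, rfl⟩ := Nat.exists_eq_add_of_le' ht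
  let A : Matrix (Fin (n + 2)) (Fin (n + 2)) K := fun i j => v i ^ ((j : ℕ) - 1)
  have hA : A.det = 0 := Matrix.det_zero_of_column_eq (i := 0) (j := 1) (by simp) (by simp [A])
  have hminor (i : Fin (n + 2)) :
      A.submatrix i.succAbove Fin.succ = Matrix.vandermonde (v ∘ i.succAbove) := by
    ext j k
    rw [Matrix.submatrix_apply, Matrix.vandermonde_apply]
    simp [A]
  rw [coboundary_ofFn, ← hA, Matrix.det_succ_column_zero]
  refine Finset.sum_congr rfl fun i _ => ?_
  rw [vandermonde_ofFn, hminor]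
  simp [A]

lemma vandermonde_map_add_right (c : K) (t : List K) :
    vandermonde (t.map (· + c)) = vandermonde t := by
  induction t with
  | nil => rfl
  | cons a t ih => simp [vandermonde, ih, Function.comp_def]

lemma vandermonde_ne_zero_iff [IsDomain K] (t : List K) : vandermonde t ≠ 0 ↔ t.Nodup := by
  induction t with
  | nil => simp [vandermonde]
  | cons a t ih =>
    rw [vandermonde, mul_ne_zero_iff, ih, List.nodup_cons]
    simp [List.prod_eq_zero_iff, sub_eq_zero]

/-- The list obtained by replacing each entry `a` by the two entries `a, a + 1`. -/
def successorPairs (l : List K) : List K := l.flatMap fun a => [a, a + 1]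

@[simp] lemma successorPairs_nil : successorPairs ([] : List K) = [] := rfl

@[simp] lemma successorPairs_cons (a : K) (l : List K) :
    successorPairs (a :: l) = a :: (a + 1) :: successorPairs l := rfl

lemma length_successorPairs (l : List K) : (successorPairs l).length = 2 * l.length := by
  induction l with
  | nil => rfl
  | cons a l ih => simp [ih, mul_add]

lemma mem_successorPairs {l : List K} {c : K} :
    c ∈ successorPairs l ↔ ∃ a ∈ l, c = a ∨ c = a + 1 := by
  simp [successorPairs]

lemma prod_map_successorPairs_perm (f : K → K) {l l' : List K} (h : l.Perm l') :
    ((successorPairs l).map f).prod = ((successorPairs l').map f).prod :=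
  ((h.flatMap_right _).map f).prod_eq

/-- Moving a pair past another one is an even permutation of the arguments. -/
lemma vandermonde_successorPairs_perm {l l' : List K} (h : l.Perm l') :
    vandermonde (successorPairs l) = vandermonde (successorPairs l') := by
  induction h with
  | nil => rfl
  | cons x h ih =>
    simp only [successorPairs_cons, vandermonde, List.map_cons, List.prod_cons, ih,
      prod_map_successorPairs_perm _ h]
  | swap x y l =>
    simp only [successorPairs_cons, vandermonde, List.map_cons, List.prod_cons]
    ring
  | trans _ _ ih₁ ih₂ => exact ih₁.trans ih₂

lemma vandermonde_cons_successorPairs_perm (c : K) {l l' : List K} (h : l.Perm l') :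
    vandermonde (c :: successorPairs l) = vandermonde (c :: successorPairs l') := by
  rw [vandermonde, vandermonde, vandermonde_successorPairs_perm h,
    prod_map_successorPairs_perm _ h]

end Vandermonde

/-! ### Tilings of `ℤ/p ∖ {0}` by pairs of consecutive residues -/

section Tilings

lemma mem_of_nodup_of_card_le_length {α : Type*} [Fintype α] {t : List α} (ht : t.Nodup)
    (hcard : Fintype.card α ≤ t.length) (c : α) : c ∈ t := by
  classical
  rw [← List.mem_toFinset, Finset.eq_univ_of_card t.toFinset]
  · exact Finset.mem_univ c
  · rw [List.toFinset_card_of_nodup ht]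
    exact le_antisymm ht.length_le_card hcard

/-- The residues `1, 3, …, 2 * m - 1` modulo `2 * m + 1`. -/
def oddResidue (m : ℕ) (j : Fin m) : ZMod (2 * m + 1) := (2 * j + 1 : ℕ)

lemma oddResidue_injective (m : ℕ) : Function.Injective (oddResidue m) := fun i j h => by
  have := CharP.natCast_injOn_Iio (ZMod (2 * m + 1)) (2 * m + 1)
    (show 2 * (i : ℕ) + 1 < 2 * m + 1 by omega) (show 2 * (j : ℕ) + 1 < 2 * m + 1 by omega) h
  omega

lemma range_eq_zero_cons_pairs (m : ℕ) :
    List.range (2 * m + 1) = 0 :: (List.range m).flatMap fun j => [2 * j + 1, 2 * j + 2] := by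
  induction m with
  | zero => rfl
  | succ m ih =>
    rw [mul_add, mul_one, List.range_succ, List.range_succ, ih, List.range_succ (n := m)]
    simp

lemma zero_cons_successorPairs_oddResidue (m : ℕ) :
    0 :: successorPairs (List.ofFn (oddResidue m)) =
      (List.range (2 * m + 1)).map ((↑) : ℕ → ZMod (2 * m + 1)) := by
  rw [range_eq_zero_cons_pairs, successorPairs, List.ofFn_eq_map, List.flatMap_map, List.map_cons,
    List.map_flatMap, ← List.map_coe_finRange_eq_range, List.flatMap_map, Nat.cast_zero]
  congr 2
  funext j
  simp only [oddResidue, List.map_cons, List.map_nil, ← Nat.cast_add_one]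

lemma nodup_zero_cons_successorPairs_oddResidue (m : ℕ) :
    (0 :: successorPairs (List.ofFn (oddResidue m))).Nodup := by
  rw [zero_cons_successorPairs_oddResidue]
  refine List.Nodup.map_on (fun x hx y hy h => ?_) List.nodup_range
  exact CharP.natCast_injOn_Iio _ _ (List.mem_range.1 hx) (List.mem_range.1 hy) h

lemma oddResidue_ne_zero (m : ℕ) (j : Fin m) : oddResidue m j ≠ 0 := fun h0 =>
  (List.nodup_cons.1 (nodup_zero_cons_successorPairs_oddResidue m)).1
    (mem_successorPairs.2 ⟨_, List.mem_ofFn.2 ⟨j, rfl⟩, .inl h0.symm⟩)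

lemma ne_add_one_of_nodup_successorPairs {K : Type*} [CommRing K] {l : List K}
    (h : (successorPairs l).Nodup) {a b : K} (ha : a ∈ l) (hb : b ∈ l) : a ≠ b + 1 := by
  induction l with
  | nil => simp at ha
  | cons c l ih =>
    simp only [successorPairs_cons, List.nodup_cons, List.mem_cons, mem_successorPairs,
      not_or, not_exists, not_and] at h
    grind

lemma oddResidue_mem_of_nodup {m : ℕ} {l : List (ZMod (2 * m + 1))} (hl : l.length = m)
    (h : (0 :: successorPairs l).Nodup) (j : Fin m) : oddResidue m j ∈ l := by
  have hcover (c : ZMod (2 * m + 1)) (hc : c ≠ 0) : ∃ a ∈ l, c = a ∨ c = a + 1 := by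
    have := mem_of_nodup_of_card_le_length h (by simp [length_successorPairs, hl]) c
    simpa [hc, mem_successorPairs] using this
  rw [List.nodup_cons, mem_successorPairs] at h
  obtain ⟨i, hi⟩ := j
  induction i with
  | zero =>
    obtain ⟨a, ha, ha' | ha'⟩ := hcover _ (oddResidue_ne_zero m ⟨0, hi⟩)
    · rwa [ha']
    · have ha0 : a = 0 := by simpa [oddResidue] using ha'
      exact absurd ⟨a, ha, .inl ha0.symm⟩ h.1
  | succ i ih =>
    obtain ⟨a, ha, ha' | ha'⟩ := hcover _ (oddResidue_ne_zero m ⟨i + 1, hi⟩)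
    · rwa [ha']
    · refine absurd ?_ (ne_add_one_of_nodup_successorPairs h.2 ha (ih (by omega)))
      simp only [oddResidue] at ha' ⊢
      push_cast at ha' ⊢
      linear_combination -ha'

lemma perm_oddResidue_of_nodup {m : ℕ} {l : List (ZMod (2 * m + 1))} (hl : l.length = m)
    (h : (0 :: successorPairs l).Nodup) : (List.ofFn (oddResidue m)).Perm l := by
  have hsub : List.ofFn (oddResidue m) ⊆ l := by
    intro c hc
    obtain ⟨j, rfl⟩ := List.mem_ofFn.1 hc
    exact oddResidue_mem_of_nodup hl h j
  refine (List.Nodup.subperm ?_ hsub).perm_of_length_le (by simp [hl])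
  exact List.nodup_ofFn.2 (oddResidue_injective m)

lemma exists_perm_of_ofFn_perm {α : Type*} {n : ℕ} {a b : Fin n → α} (hb : b.Injective)
    (h : (List.ofFn b).Perm (List.ofFn a)) : ∃ σ : Equiv.Perm (Fin n), b ∘ σ = a := by
  have hmem (j : Fin n) : ∃ i, b i = a j := by
    rw [← List.mem_ofFn, h.mem_iff]
    simp
  choose σ hσ using hmem
  have ha : a.Injective := List.nodup_ofFn.1 (h.nodup_iff.1 (List.nodup_ofFn.2 hb))
  have hinj : σ.Injective := fun i j hij => ha (by rw [← hσ, ← hσ, hij])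
  exact ⟨Equiv.ofBijective σ (Finite.injective_iff_bijective.1 hinj), funext hσ⟩

/-- The sum of the Vandermonde products of all lists that extend `u ++ [c]` by `m` pairs
`a, a + 1`. -/
def pairSum {K : Type*} [CommRing K] [Fintype K] (m : ℕ) (u : List K) (c : K) : K :=
  ∑ a : Fin m → K, vandermonde (u ++ c :: successorPairs (List.ofFn a))

lemma pairSum_zero {K : Type*} [CommRing K] [Fintype K] (u : List K) (c : K) :
    pairSum 0 u c = vandermonde (u ++ [c]) := by
  simp [pairSum]

lemma pairSum_succ {K : Type*} [CommRing K] [Fintype K] (m : ℕ) (u : List K) (c : K) :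
    pairSum (m + 1) u c = ∑ a : K, pairSum m (u ++ [c, a]) (a + 1) := by
  rw [pairSum, ← (Fin.consEquiv fun _ : Fin (m + 1) => K).sum_comp, Fintype.sum_prod_type]
  simp [pairSum, Fin.consEquiv, List.ofFn_succ]

/-- Only the `m!` reorderings of the tiling `{1, 2}, {3, 4}, …` contribute to the sum, and they
contribute equally. -/
lemma pairSum_nil_zero_eq (m : ℕ) [IsDomain (ZMod (2 * m + 1))] :
    pairSum m [] (0 : ZMod (2 * m + 1)) =
      m.factorial * vandermonde (0 :: successorPairs (List.ofFn (oddResidue m))) := by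
  symm
  calc _ = ∑ _σ : Equiv.Perm (Fin m),
          vandermonde (0 :: successorPairs (List.ofFn (oddResidue m))) := by
        simp [Fintype.card_perm]
    _ = _ := by
      refine Finset.sum_of_injOn (fun σ => oddResidue m ∘ σ) ?_ (by simp) ?_ ?_
      · intro σ _ τ _ h
        ext1 j
        exact oddResidue_injective m (congrFun h j)
      · intro a _ ha
        by_contra hne
        obtain ⟨σ, hσ⟩ := exists_perm_of_ofFn_perm (oddResidue_injective m)
          (perm_oddResidue_of_nodup (List.length_ofFn) ((vandermonde_ne_zero_iff _).1 hne))
        exact ha ⟨σ, by simp, hσ⟩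
      · intro σ _
        exact vandermonde_cons_successorPairs_perm 0 (σ.ofFn_comp_perm _).symm

lemma pairSum_nil_zero_ne_zero (m : ℕ) [Fact (2 * m + 1).Prime] :
    pairSum m [] (0 : ZMod (2 * m + 1)) ≠ 0 := by
  rw [pairSum_nil_zero_eq]
  refine mul_ne_zero ?_ ((vandermonde_ne_zero_iff _).2
    (nodup_zero_cons_successorPairs_oddResidue m))
  rw [Ne, ZMod.natCast_eq_zero_iff, (Fact.out : (2 * m + 1).Prime).dvd_factorial]
  omega

end Tilings

/-! ### The Euler cocycle and its value on a resolution family -/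

section EulerCocycle

variable (p : ℕ) [Fact p.Prime] {ι : Type*}

/-- The cup product, over the entries `s` of a list of coordinates, of the Vandermonde cocycles of
degree `p - 1` in the `s`-th coordinate of the labels. It represents a mod `p` Euler class. -/
def eulerCocycle : List ι → List (ι → ZMod p) → ZMod p
  | [], t => if t.length = 1 then 1 else 0
  | s :: S, t => cup (p - 1) (fun t => vandermonde (t.map (· s))) (eulerCocycle S) t

lemma eulerCocycle_apply_nil (S : List ι) : eulerCocycle p S [] = 0 := by
  cases S <;> simp [eulerCocycle]

lemma eulerCocycle_cons (s : ι) (S : List ι) : eulerCocycle p (s :: S) =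
    cup (p - 1) (fun t => vandermonde (t.map (· s))) (eulerCocycle p S) := by
  funext t
  rw [eulerCocycle]

lemma coboundary_eulerCocycle (S : List ι) (t : List (ι → ZMod p)) :
    coboundary (eulerCocycle p S) t = 0 := by
  induction S generalizing t with
  | nil =>
    match t with
    | [] => simp
    | [a] => simp [coboundary_cons, eulerCocycle]
    | [a, b] => simp [coboundary_cons, eulerCocycle]
    | a :: b :: c :: t =>
      refine coboundary_eq_zero_of_forall_length _ _ fun s hs => if_neg ?_
      simp only [List.length_cons] at hs
      omega
  | cons s S ih =>
    rw [eulerCocycle_cons, coboundary_cup _ _ _ (eulerCocycle_apply_nil p S), funext ih,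
      cup_zero_right, mul_zero, add_zero]
    refine cup_eq_zero_of_left _ _ _ fun t ht => ?_
    have := (Fact.out : p.Prime).two_le
    rw [coboundary_comp_map, coboundary_vandermonde _ (by rw [List.length_map]; omega)]

lemma eulerCocycle_map_add_right (S : List ι) (v : ι → ZMod p) (t : List (ι → ZMod p)) :
    eulerCocycle p S (t.map (· + v)) = eulerCocycle p S t := by
  induction S generalizing t with
  | nil => simp [eulerCocycle]
  | cons s S ih =>
    rw [eulerCocycle_cons, cup_map, funext ih]
    refine cup_congr_left _ _ _ fun t _ => ?_
    rw [← vandermonde_map_add_right (v s) (t.map (· s)), List.map_map, List.map_map]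
    rfl

lemma exists_mem_eq_of_eulerCocycle_ne_zero {S : List ι} {t : List (ι → ZMod p)}
    (h : eulerCocycle p S t ≠ 0) {s : ι} (hs : s ∈ S) (c : ZMod p) : ∃ v ∈ t, v s = c := by
  induction S generalizing t with
  | nil => simp at hs
  | cons s' S ih =>
    rw [eulerCocycle_cons] at h
    obtain ⟨⟨w, hwt, hw, hnodup⟩, w', hwt', hw'⟩ := exists_sublist_of_cup_ne_zero h
    obtain rfl | hs := List.mem_cons.1 hs
    · have := mem_of_nodup_of_card_le_length ((vandermonde_ne_zero_iff _).1 hnodup)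
        (by have := (Fact.out : p.Prime).two_le; simp; omega) c
      obtain ⟨v, hv, rfl⟩ := List.mem_map.1 this
      exact ⟨v, hwt.subset hv, rfl⟩
    · obtain ⟨v, hv, hc⟩ := ih hw' hs
      exact ⟨v, hwt'.subset hv, hc⟩

end EulerCocycle

section PrefixedCup

variable {K ι : Type*} [CommRing K]

/-- The cup product of the Vandermonde cochain in the coordinate `s` with `β`, once the labels `u`
have already been read. -/
def prefixedCup (s : ι) (β : List (ι → K) → K) (q : ℕ) (u : List K) : List (ι → K) → K :=
  cup q (fun t => vandermonde (u ++ t.map (· s))) β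

lemma eval_prefixedCup_succ_cone (s : ι) (β : List (ι → K) → K) (q : ℕ) (u : List K)
    (v : ι → K) (c : OrderedChain K (ι → K)) :
    eval (prefixedCup s β (q + 1) u) (cone v c) = eval (prefixedCup s β q (u ++ [v s])) c := by
  rw [eval_cone]
  congr 2
  funext t
  simp [prefixedCup]

lemma eval_prefixedCup_zero_cone (s : ι) (β : List (ι → K) → K) (u : List K) (v : ι → K)
    (c : OrderedChain K (ι → K)) :
    eval (prefixedCup s β 0 u) (cone v c) = vandermonde (u ++ [v s]) * eval β (cone v c) := by
  have h : eval (prefixedCup s β 0 u) ∘ₗ cone v =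
      vandermonde (u ++ [v s]) • eval β ∘ₗ cone v :=
    Finsupp.lhom_ext fun t a => by simp [prefixedCup, mul_left_comm]
  exact DFunLike.congr_fun h c

lemma prefixedCup_eq_zero_of_not_nodup [IsDomain K] (s : ι) (β : List (ι → K) → K) (q : ℕ)
    {u : List K} (hu : ¬ u.Nodup) : prefixedCup s β q u = fun _ => 0 := by
  funext t
  refine cup_eq_zero_of_left _ _ _ fun w _ => ?_
  by_contra h
  exact hu (((vandermonde_ne_zero_iff _).1 h).sublist (List.sublist_append_left _ _))

end PrefixedCup

section Evaluation

/-- The vector `v` is normalized with leading index `k`: its first nonzero entry is `v k = 1`. -/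
def IsLeadingIndex {R κ : Type*} [Zero R] [One R] [LT κ] (v : κ → R) (k : κ) : Prop :=
  v k = 1 ∧ ∀ j < k, v j = 0

/-- The action of the generators of `(ℤ/p)^κ` on labels: the `k`-th one translates by `g k`. -/
def translate {κ G : Type*} [Add G] (g : κ → G) (k : κ) (v : G) : G := v + g k

lemma translate_commute {κ G : Type*} [AddCommSemigroup G] (g : κ → G) (k l : κ) :
    Function.Commute (translate g k) (translate g l) := fun v => add_right_comm v (g l) (g k)

variable {p : ℕ} {ι κ : Type*}

lemma translate_iterate (g : κ → ι → ZMod p) (k : κ) (i : ℕ) :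
    (translate g k)^[i] = (· + (i : ZMod p) • g k) := by
  rw [Nat.cast_smul_eq_nsmul]
  exact add_right_iterate (g k) i

lemma translate_iterate_self (g : κ → ι → ZMod p) (k : κ) : (translate g k)^[p] = id := by
  rw [translate_iterate]
  funext v
  simp

lemma sum_range_natCast [NeZero p] {M : Type*} [AddCommMonoid M] (F : ZMod p → M) :
    ∑ i ∈ Finset.range p, F i = ∑ c : ZMod p, F c := by
  refine Finset.sum_bij (fun i _ => (i : ZMod p)) (by simp) (fun i hi j hj h => ?_)
    (fun c _ => ⟨c.val, Finset.mem_range.2 (ZMod.val_lt c), by simp⟩) (by simp)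
  exact CharP.natCast_injOn_Iio _ p (Finset.mem_range.1 hi) (Finset.mem_range.1 hj) h

/-- The value of the partially read cup product on the translate by `c • g k` of the chain `a n`. -/
def blockValue (g : κ → ι → ZMod p) (a : (κ → ℕ) → OrderedChain (ZMod p) (ι → ZMod p)) (s : ι)
    (k : κ) (β : List (ι → ZMod p) → ZMod p) (q : ℕ) (u : List (ZMod p)) (c : ZMod p)
    (n : κ → ℕ) : ZMod p :=
  eval (prefixedCup s β q u) (chainMap (· + c • g k) (a n))

/-- Directions that move neither the coordinate `s` nor the value of `β` act trivially on the cup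
product, so their resolution coefficients are killed. -/
lemma eval_prefixedCup_resOp_eq_zero {g : κ → ι → ZMod p} {s : ι}
    {β : List (ι → ZMod p) → ZMod p} (hβ : ∀ v t, β (t.map (· + v)) = β t) {j : κ} (hj : g j s = 0)
    (q m : ℕ) (u : List (ZMod p)) (v : ι → ZMod p)
    (c : OrderedChain (ZMod p) (ι → ZMod p)) :
    eval (prefixedCup s β q u) (chainMap (· + v) (resOp p (translate g) j m c)) = 0 := by
  refine map_periodicCoeff_eq_zero p m (eval (prefixedCup s β q u) ∘ₗ chainMap (· + v))
    (fun c => ?_) c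
  have hcomm : (· + v) ∘ translate g j = (· + g j) ∘ (· + v) :=
    funext fun w => add_right_comm w (g j) v
  have hinv (t : List (ι → ZMod p)) :
      prefixedCup s β q u (t.map (· + g j)) = prefixedCup s β q u t := by
    rw [prefixedCup, cup_map, funext (hβ _)]
    refine cup_congr_left _ _ _ fun t _ => ?_
    simp [Function.comp_def, hj]
  rw [LinearMap.comp_apply, LinearMap.comp_apply, chainMap_chainMap, hcomm, ← chainMap_chainMap,
    eval_chainMap, funext hinv]

variable [LinearOrder κ] [Fintype κ] {g : κ → ι → ZMod p}
  {a : (κ → ℕ) → OrderedChain (ZMod p) (ι → ZMod p)}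
  (ha : IsConedFamily p (translate g) (fun _ => 0) a) {s : ι} {k : κ}
  (hs : IsLeadingIndex (fun j => g j s) k) {β : List (ι → ZMod p) → ZMod p}

section

include ha hs

lemma IsConedFamily.blockValue_succ (q : ℕ) (u : List (ZMod p)) (c : ZMod p) (n : κ → ℕ) :
    blockValue g a s k β (q + 1) u c n = eval (prefixedCup s β q (u ++ [c]))
      (chainMap (· + c • g k) (totalDiff (resOp p (translate g)) a n + augmentation n)) := by
  conv_lhs => rw [blockValue, ha n, chainMap_cone, eval_prefixedCup_succ_cone]
  simp [hs.1]

lemma IsConedFamily.blockValue_zero (hβ : ∀ v t, β (t.map (· + v)) = β t) (u : List (ZMod p))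
    (c : ZMod p) (n : κ → ℕ) :
    blockValue g a s k β 0 u c n = vandermonde (u ++ [c]) * eval β (a n) := by
  have hinv : eval β (chainMap (· + c • g k) (a n)) = eval β (a n) := by
    rw [eval_chainMap, funext (hβ _)]
  obtain ⟨z, hz⟩ : ∃ z, a n = cone 0 z := ⟨_, ha n⟩
  have hcone : cone (0 + c • g k) (chainMap (· + c • g k) z) = chainMap (· + c • g k) (a n) := by
    rw [hz, chainMap_cone]
  have := eval_prefixedCup_zero_cone s β u (0 + c • g k) (chainMap (· + c • g k) z)
  rw [hcone, hinv] at this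
  simpa [blockValue, hs.1] using this

lemma IsConedFamily.blockValue_eq_zero_of_mem [Fact p.Prime] (q : ℕ) {u : List (ZMod p)}
    {c : ZMod p} (n : κ → ℕ) (hc : c ∈ u) : blockValue g a s k β q u c n = 0 := by
  have hnodup : ¬ (u ++ [c]).Nodup := fun h =>
    List.disjoint_of_nodup_append h hc (List.mem_singleton_self c)
  cases q with
  | zero =>
    have hv : vandermonde (u ++ [c]) = 0 :=
      not_not.1 (mt (vandermonde_ne_zero_iff (u ++ [c])).1 hnodup)
    rw [blockValue, ha n, chainMap_cone, eval_prefixedCup_zero_cone]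
    simp [hs.1, hv]
  | succ q =>
    rw [ha.blockValue_succ hs, prefixedCup_eq_zero_of_not_nodup _ _ _ hnodup, eval_zero]

end

variable (hβ : ∀ v t, β (t.map (· + v)) = β t)

include ha hs hβ

lemma IsConedFamily.blockValue_succ_eq_resOp (q : ℕ) (u : List (ZMod p)) (c : ZMod p) {n : κ → ℕ}
    (hnk : n k ≠ 0) (hn : ∀ j, k < j → n j = 0) :
    blockValue g a s k β (q + 1) u c n = koszulSign (ZMod p) n k *
      eval (prefixedCup s β q (u ++ [c]))
        (chainMap (· + c • g k) (resOp p (translate g) k (n k) (a (lower n k)))) := by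
  have hn0 : n ≠ 0 := fun h => hnk (congrFun h k)
  rw [ha.blockValue_succ hs, augmentation, Pi.single_eq_of_ne hn0, add_zero, totalDiff_apply,
    map_sum, map_sum, Finset.sum_eq_single k]
  · rw [partialDiff_apply, if_neg hnk, map_smul, map_smul, smul_eq_mul]
  · intro j _ hjk
    rw [partialDiff_apply]
    split_ifs with hnj
    · simp
    · have hlt : j < k := hjk.lt_or_gt.resolve_right fun h => hnj (hn j h)
      rw [map_smul, map_smul, eval_prefixedCup_resOp_eq_zero hβ (hs.2 j hlt), smul_zero]
  · simp

/-- The identity term of `T - 1` repeats a label and hence contributes nothing. -/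
lemma IsConedFamily.blockValue_succ_of_odd [Fact p.Prime] (q : ℕ) (u : List (ZMod p)) (c : ZMod p)
    {n : κ → ℕ} (hnk : Odd (n k)) (hn : ∀ j, k < j → n j = 0) :
    blockValue g a s k β (q + 1) u c n =
      koszulSign (ZMod p) n k * blockValue g a s k β q (u ++ [c]) (c + 1) (lower n k) := by
  have hrepeat := ha.blockValue_eq_zero_of_mem hs (β := β) q (u := u ++ [c]) (c := c) (lower n k)
    (by simp)
  have hshift : (· + c • g k) ∘ translate g k = (· + (c + 1) • g k) := by
    funext v
    simp only [Function.comp_apply, translate, add_smul, one_smul]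
    abel
  rw [ha.blockValue_succ_eq_resOp hs hβ q u c hnk.pos.ne' hn, resOp,
    periodicCoeff_apply_of_odd p hnk, map_sub, map_sub, chainMap_chainMap, hshift]
  unfold blockValue at hrepeat ⊢
  rw [hrepeat, sub_zero]

lemma IsConedFamily.blockValue_succ_of_even [NeZero p] (q : ℕ) (u : List (ZMod p)) (c : ZMod p)
    {n : κ → ℕ} (hnk0 : n k ≠ 0) (hnk : Even (n k)) (hn : ∀ j, k < j → n j = 0) :
    blockValue g a s k β (q + 1) u c n =
      koszulSign (ZMod p) n k * ∑ b, blockValue g a s k β q (u ++ [c]) b (lower n k) := by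
  have hshift (i : ℕ) : (· + c • g k) ∘ (translate g k)^[i] = (· + (c + i) • g k) := by
    funext v
    simp [translate_iterate, add_smul, add_comm, add_left_comm]
  rw [ha.blockValue_succ_eq_resOp hs hβ q u c hnk0 hn, resOp, periodicCoeff_apply_of_even p hnk,
    map_sum, map_sum, ← Equiv.sum_comp (Equiv.addLeft c), ← sum_range_natCast]
  refine congrArg _ (Finset.sum_congr rfl fun i _ => ?_)
  rw [chainMap_pow, chainMap_chainMap, hshift]
  rfl

/-- Reading two labels at a time produces the sums `pairSum`; the unit `ε` is a product of Koszul
signs and depends on the degrees only. -/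
lemma IsConedFamily.exists_blockValue_two_mul_eq [Fact p.Prime] (m : ℕ) {n : κ → ℕ}
    (hnk : Even (n k)) (hn : ∀ j, k < j → n j = 0) :
    ∃ ε : ZMod p, IsUnit ε ∧ ∀ u c, blockValue g a s k β (2 * m) u c (n + Pi.single k (2 * m)) =
      ε * (pairSum m u c * eval β (a n)) := by
  have hlater (i : ℕ) : ∀ j, k < j → (n + Pi.single k i : κ → ℕ) j = 0 := fun j hj => by
    simp [hn j hj, hj.ne']
  induction m with
  | zero => exact ⟨1, isUnit_one, fun u c => by simp [ha.blockValue_zero hs hβ, pairSum_zero]⟩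
  | succ m ih =>
    obtain ⟨ε, hε, hpairs⟩ := ih
    have heven : Even ((n + Pi.single k (2 * m + 2) : κ → ℕ) k) := by
      simpa using hnk.add ((even_two_mul m).add even_two)
    have hodd : Odd ((n + Pi.single k (2 * m + 1) : κ → ℕ) k) := by
      simpa using hnk.add_odd (odd_two_mul_add_one m)
    have hstep (u : List (ZMod p)) (b : ZMod p) :
        blockValue g a s k β (2 * m + 1) u b (n + Pi.single k (2 * m + 1)) =
          koszulSign (ZMod p) (n + Pi.single k (2 * m + 1)) k *
            (ε * (pairSum m (u ++ [b]) (b + 1) * eval β (a n))) := by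
      rw [ha.blockValue_succ_of_odd hs hβ _ _ _ hodd (hlater _), lower_add_single, hpairs]
    refine ⟨koszulSign (ZMod p) (n + Pi.single k (2 * m + 2)) k *
      koszulSign (ZMod p) (n + Pi.single k (2 * m + 1)) k * ε,
      ((isUnit_koszulSign _ _).mul (isUnit_koszulSign _ _)).mul hε, fun u c => ?_⟩
    rw [show 2 * (m + 1) = 2 * m + 1 + 1 by ring,
      ha.blockValue_succ_of_even hs hβ _ _ _ (by simp) heven (hlater _), lower_add_single,
      Finset.sum_congr rfl fun b _ => hstep (u ++ [c]) b, pairSum_succ, ← Finset.mul_sum,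
      ← Finset.mul_sum, ← Finset.sum_mul]
    simp only [List.append_assoc, List.cons_append, List.nil_append]
    ring

lemma IsConedFamily.blockValue_one_ne_zero (hp : p = 2) {n : κ → ℕ} (hn : ∀ j, k < j → n j = 0)
    (hne : eval β (a n) ≠ 0) : blockValue g a s k β 1 [] 0 (n + Pi.single k 1) ≠ 0 := by
  subst hp
  have : Fact (Nat.Prime 2) := ⟨Nat.prime_two⟩
  have hlater : ∀ j, k < j → (n + Pi.single k 1 : κ → ℕ) j = 0 := fun j hj => by
    simp [hn j hj, hj.ne']
  have hvalue (b : ZMod 2) : blockValue g a s k β 0 ([] ++ [0]) b n = b * eval β (a n) := by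
    simp [ha.blockValue_zero hs hβ, vandermonde]
  have hlower : lower (n + Pi.single k 1) k = n := by
    simpa using lower_add_single n k 0
  obtain heven | hodd := Nat.even_or_odd ((n + Pi.single k 1 : κ → ℕ) k)
  · rw [ha.blockValue_succ_of_even hs hβ 0 [] 0 (by simp) heven hlater, hlower,
      Finset.sum_congr rfl fun b _ => hvalue b, ← Finset.sum_mul]
    exact mul_ne_zero (isUnit_koszulSign _ _).ne_zero (mul_ne_zero (by decide) hne)
  · rw [ha.blockValue_succ_of_odd hs hβ 0 [] 0 hodd hlater, hlower, hvalue, zero_add, one_mul]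
    exact mul_ne_zero (isUnit_koszulSign _ _).ne_zero hne

lemma IsConedFamily.blockValue_ne_zero [Fact p.Prime] {n : κ → ℕ} (hdvd : p - 1 ∣ n k)
    (hn : ∀ j, k < j → n j = 0) (hne : eval β (a n) ≠ 0) :
    blockValue g a s k β (p - 1) [] 0 (n + Pi.single k (p - 1)) ≠ 0 := by
  obtain hp | ⟨m, rfl⟩ := (Fact.out : p.Prime).eq_two_or_odd'
  · rw [show p - 1 = 1 by omega]
    exact ha.blockValue_one_ne_zero hs hβ hp hn hne
  · rw [Nat.add_sub_cancel] at hdvd ⊢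
    obtain ⟨ε, hε, hpairs⟩ := ha.exists_blockValue_two_mul_eq hs hβ m
      (even_iff_two_dvd.2 ((dvd_mul_right 2 m).trans hdvd)) hn
    rw [hpairs]
    exact mul_ne_zero hε.ne_zero (mul_ne_zero (pairSum_nil_zero_ne_zero m) hne)

end Evaluation

section EulerDegree

variable {ι κ : Type*} [LinearOrder κ]

/-- The multidegree in which the Euler cocycle of the list `S` is evaluated: each `s ∈ S`
contributes `p - 1` in the direction of its leading index. -/
def eulerDegree (p : ℕ) (lead : ι → κ) : List ι → κ → ℕ
  | [] => 0
  | s :: S => eulerDegree p lead S + Pi.single (lead s) (p - 1)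

lemma sub_one_dvd_eulerDegree (p : ℕ) (lead : ι → κ) (S : List ι) (j : κ) :
    p - 1 ∣ eulerDegree p lead S j := by
  induction S with
  | nil => exact dvd_zero _
  | cons s S ih =>
    refine dvd_add ih ?_
    obtain rfl | hj := eq_or_ne j (lead s) <;> simp [*]

lemma eulerDegree_eq_zero (p : ℕ) {lead : ι → κ} {S : List ι} {j : κ} (h : ∀ s ∈ S, lead s < j) :
    eulerDegree p lead S j = 0 := by
  induction S with
  | nil => rfl
  | cons s S ih =>
    rw [List.forall_mem_cons] at h
    simp [eulerDegree, ih h.2, h.1.ne']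

lemma sum_eulerDegree [Fintype κ] (p : ℕ) (lead : ι → κ) (S : List ι) :
    ∑ j, eulerDegree p lead S j = S.length * (p - 1) := by
  induction S with
  | nil => simp [eulerDegree]
  | cons s S ih => simp [eulerDegree, Finset.sum_add_distrib, ih, add_mul]

/-- The factors are ordered by decreasing leading index, so that while one of them is read the
later directions have degree `0` and the earlier ones do not move its label. -/
lemma IsConedFamily.eval_eulerCocycle_ne_zero [Fintype κ] {p : ℕ} [Fact p.Prime]
    {g : κ → ι → ZMod p} {a : (κ → ℕ) → OrderedChain (ZMod p) (ι → ZMod p)}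
    (ha : IsConedFamily p (translate g) (fun _ => 0) a) {lead : ι → κ}
    (hlead : ∀ s, IsLeadingIndex (fun k => g k s) (lead s)) {S : List ι}
    (hS : S.Pairwise fun s s' => lead s' ≤ lead s) :
    eval (eulerCocycle p S) (a (eulerDegree p lead S)) ≠ 0 := by
  induction S with
  | nil => simp [eulerDegree, ha.apply_zero, eulerCocycle]
  | cons s S ih =>
    rw [List.pairwise_cons] at hS
    have hblock := ha.blockValue_ne_zero (hlead s) (eulerCocycle_map_add_right p S)
      (sub_one_dvd_eulerDegree p lead S (lead s))
      (fun j hj => eulerDegree_eq_zero p fun s' hs' => (hS.1 s' hs').trans_lt hj) (ih hS.2)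
    have hid : (· + (0 : ZMod p) • g (lead s)) = id := by
      funext v
      simp
    rw [blockValue, hid, chainMap_id] at hblock
    rwa [eulerCocycle_cons]

end EulerDegree

/-! ### The Radon transform of a finite vector space -/

section Radon

/-- Linear functionals on `κ → K` whose first nonzero coefficient is `1`: representatives of the
nonzero functionals up to scaling. -/
abbrev NormalizedFunctional (K κ : Type*) [Zero K] [One K] [LT κ] :=
  {v : κ → K // ∃ k, IsLeadingIndex v k}

section

variable {K κ : Type*} [Field K] [LinearOrder κ]

lemma NormalizedFunctional.ne_zero (w : NormalizedFunctional K κ) : w.1 ≠ 0 := by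
  obtain ⟨k, hk, -⟩ := w.2
  exact fun h => one_ne_zero (hk.symm.trans (congrFun h k))

lemma exists_smul_normalizedFunctional [WellFoundedLT κ] {v : κ → K} (hv : v ≠ 0) :
    ∃ (c : K) (w : NormalizedFunctional K κ), c ≠ 0 ∧ v = c • w.1 := by
  obtain ⟨k, hk, hmin⟩ := wellFounded_lt.has_min {k | v k ≠ 0} (Function.ne_iff.1 hv)
  refine ⟨v k, ⟨(v k)⁻¹ • v, k, inv_mul_cancel₀ hk, fun j hj => ?_⟩, hk, ?_⟩
  · simp [not_ne_iff.1 fun h => hmin j h hj]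
  · rw [smul_smul, mul_inv_cancel₀ hk, one_smul]

lemma IsLeadingIndex.le_of_smul_eq {v w : κ → K} {k l : κ} {b c : K} (hv : IsLeadingIndex v k)
    (hw : IsLeadingIndex w l) (hc : c ≠ 0) (h : b • v = c • w) : k ≤ l := by
  by_contra! hlt
  have := congrFun h l
  simp [hv.2 l hlt, hw.1, hc.symm] at this

lemma NormalizedFunctional.smul_injective {b c : K} {v w : NormalizedFunctional K κ} (hb : b ≠ 0)
    (hc : c ≠ 0) (h : b • v.1 = c • w.1) : b = c ∧ v = w := by
  obtain ⟨v, k, hk⟩ := v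
  obtain ⟨w, l, hl⟩ := w
  obtain rfl : k = l := (hk.le_of_smul_eq hl hc h).antisymm (hl.le_of_smul_eq hk hb h.symm)
  obtain rfl : b = c := by simpa [hk.1, hl.1] using congrFun h k
  exact ⟨rfl, Subtype.ext (smul_right_injective _ hb h)⟩

lemma card_normalizedFunctional [Fintype K] [Fintype κ] [Fintype (NormalizedFunctional K κ)] :
    Fintype.card (NormalizedFunctional K κ) * (Fintype.card K - 1) =
      Fintype.card K ^ Fintype.card κ - 1 := by
  classical
  have hK : Fintype.card {c : K // c ≠ 0} = Fintype.card K - 1 := by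
    simp [Fintype.card_subtype_compl]
  have hfun : Fintype.card {v : κ → K // v ≠ 0} = Fintype.card K ^ Fintype.card κ - 1 := by
    simp [Fintype.card_subtype_compl]
  rw [← hK, ← hfun, ← Fintype.card_prod]
  refine Fintype.card_of_bijective
    (f := fun q : NormalizedFunctional K κ × {c : K // c ≠ 0} =>
      (⟨q.2.1 • q.1.1, smul_ne_zero q.2.2 q.1.ne_zero⟩ : {v : κ → K // v ≠ 0})) ⟨?_, ?_⟩
  · rintro ⟨v, b, hb⟩ ⟨w, c, hc⟩ h
    obtain ⟨rfl, rfl⟩ := NormalizedFunctional.smul_injective hb hc (congrArg Subtype.val h)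
    rfl
  · rintro ⟨v, hv⟩
    obtain ⟨c, w, hc, rfl⟩ := exists_smul_normalizedFunctional hv
    exact ⟨(w, ⟨c, hc⟩), rfl⟩

end

variable {K κ R : Type*} [Fintype K] [DecidableEq K] [Fintype κ] [DecidableEq κ]

/-- The sum of `F` over the affine hyperplane where the functional `v` takes the value `c`. -/
def cosetSum [CommRing K] [AddCommMonoid R] (F : (κ → K) → R) (v : κ → K) (c : K) : R :=
  ∑ i, if v ⬝ᵥ i = c then F i else 0

lemma sum_cosetSum [CommRing K] [AddCommMonoid R] (F : (κ → K) → R) (v : κ → K) :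
    ∑ c, cosetSum F v c = ∑ i, F i := by
  unfold cosetSum
  rw [Finset.sum_comm]
  simp

lemma cosetSum_comp_sub_right [CommRing K] [AddCommMonoid R] (F : (κ → K) → R) (g v : κ → K)
    (c : K) : cosetSum (fun i => F (i - g)) v c = cosetSum F v (c - v ⬝ᵥ g) := by
  unfold cosetSum
  rw [← Equiv.sum_comp (Equiv.addRight g)]
  simp [dotProduct_add, eq_sub_iff_add_eq]

lemma continuousOn_cosetSum {X : Type*} [TopologicalSpace X] [CommRing K] [AddCommMonoid R]
    [TopologicalSpace R] [ContinuousAdd R] {F : X → (κ → K) → R} {A : Set X}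
    (hF : ∀ i, ContinuousOn (fun x => F x i) A) (v : κ → K) (c : K) :
    ContinuousOn (fun x => cosetSum (F x) v c) A := by
  refine continuousOn_finsetSum _ fun i _ => ?_
  split_ifs
  exacts [hF i, continuousOn_const]

lemma cosetSum_smul [Field K] [AddCommMonoid R] (F : (κ → K) → R) (v : κ → K) {a : K} (ha : a ≠ 0)
    (c : K) : cosetSum F (a • v) c = cosetSum F v (a⁻¹ * c) :=
  Finset.sum_congr rfl fun i _ => by
    congr 1
    rw [smul_dotProduct, smul_eq_mul, eq_inv_mul_iff_mul_eq₀ ha]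

lemma card_filter_dotProduct_eq [Field K] {u : κ → K} (hu : u ≠ 0) (c : K) :
    (Finset.univ.filter fun v : κ → K => v ⬝ᵥ u = c).card =
      (Finset.univ.filter fun v : κ → K => v ⬝ᵥ u = 0).card := by
  obtain ⟨k, hk⟩ := Function.ne_iff.1 hu
  rw [Pi.zero_apply] at hk
  have hw : Pi.single k (c * (u k)⁻¹) ⬝ᵥ u = c := by
    rw [single_dotProduct, inv_mul_cancel_right₀ hk]
  refine Finset.card_bij' (fun v _ => v - Pi.single k (c * (u k)⁻¹))
    (fun v _ => v + Pi.single k (c * (u k)⁻¹)) ?_ ?_ ?_ ?_ <;>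
    simp +contextual [hw, sub_dotProduct, add_dotProduct]

lemma card_mul_card_filter_dotProduct_eq_zero [Field K] {u : κ → K} (hu : u ≠ 0) :
    Fintype.card K * (Finset.univ.filter fun v : κ → K => v ⬝ᵥ u = 0).card =
      Fintype.card K ^ Fintype.card κ := by
  have hfibers := Finset.card_eq_sum_card_fiberwise (s := (Finset.univ : Finset (κ → K)))
    (t := Finset.univ) (f := fun v => v ⬝ᵥ u) fun _ _ => Finset.mem_coe.2 (Finset.mem_univ _)
  rw [Finset.sum_congr rfl fun c _ => card_filter_dotProduct_eq hu c] at hfibers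
  simpa using hfibers.symm

variable [Field K] [Field R]

lemma card_mul_sum_cosetSum (F : (κ → K) → R) (g : κ → K) :
    Fintype.card K * ∑ v, cosetSum F v (v ⬝ᵥ g) =
      (Fintype.card K : R) ^ Fintype.card κ * ∑ i, F i +
        (Fintype.card K - 1) * (Fintype.card K : R) ^ Fintype.card κ * F g := by
  have hcount : ∀ i : κ → K,
      (Fintype.card K : R) * ∑ v : κ → K, (if v ⬝ᵥ i = v ⬝ᵥ g then F i else 0) =
        (Fintype.card K : R) ^ Fintype.card κ * F i +
          if i = g then (Fintype.card K - 1) * (Fintype.card K : R) ^ Fintype.card κ * F g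
          else 0 := by
    intro i
    have hsub : ∀ v : κ → K, v ⬝ᵥ i = v ⬝ᵥ g ↔ v ⬝ᵥ (i - g) = 0 := fun v => by
      rw [dotProduct_sub, sub_eq_zero]
    simp only [hsub]
    rw [← Finset.sum_filter, Finset.sum_const, nsmul_eq_mul, ← mul_assoc]
    split_ifs with hig
    · simp [hig]
      ring
    · have := card_mul_card_filter_dotProduct_eq_zero (sub_ne_zero.2 hig)
      rw [← Nat.cast_mul, this, Nat.cast_pow, add_zero]
  unfold cosetSum
  rw [Finset.sum_comm, Finset.mul_sum, Finset.sum_congr rfl fun i _ => hcount i,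
    Finset.sum_add_distrib, ← Finset.mul_sum]
  simp

variable [LinearOrder κ]

lemma card_mul_cosetSum {F : (κ → K) → R}
    (hF : ∀ (v : NormalizedFunctional K κ) (b c : K), cosetSum F v.1 b = cosetSum F v.1 c)
    {v : κ → K} (hv : v ≠ 0) (c : K) : Fintype.card K * cosetSum F v c = ∑ i, F i := by
  obtain ⟨a, w, ha, rfl⟩ := exists_smul_normalizedFunctional hv
  rw [cosetSum_smul F w.1 ha, ← sum_cosetSum F w.1,
    Finset.sum_congr rfl fun b _ => hF w b (a⁻¹ * c)]
  simp

lemma eq_of_cosetSum_eq [CharZero R] {F : (κ → K) → R}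
    (hF : ∀ (v : NormalizedFunctional K κ) (b c : K), cosetSum F v.1 b = cosetSum F v.1 c)
    (g g' : κ → K) : F g = F g' := by
  have hK : (Fintype.card K : R) ≠ 0 := Nat.cast_ne_zero.2 Fintype.card_ne_zero
  have hK1 : (Fintype.card K : R) - 1 ≠ 0 :=
    sub_ne_zero.2 (mod_cast (Fintype.one_lt_card (α := K)).ne')
  have hsum : ∑ v, cosetSum F v (v ⬝ᵥ g) = ∑ v, cosetSum F v (v ⬝ᵥ g') := by
    refine Finset.sum_congr rfl fun v _ => ?_
    rcases eq_or_ne v 0 with rfl | hv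
    · simp
    · exact mul_left_cancel₀ hK
        ((card_mul_cosetSum hF hv _).trans (card_mul_cosetSum hF hv _).symm)
  have hdouble := card_mul_sum_cosetSum F g
  rw [hsum, card_mul_sum_cosetSum F g'] at hdouble
  exact (mul_left_cancel₀ (mul_ne_zero hK1 (pow_ne_zero _ hK)) (add_left_cancel hdouble)).symm

end Radon

/-! ### Barycentric subdivision -/

section SupportedChains

variable {K V W C : Type*} [CommRing K] [AddCommGroup C] [Module K C] {P Q : List V → Prop}

/-- The chains all of whose simplices satisfy `P`. -/
abbrev supportedChains (K : Type*) [CommRing K] {V : Type*} (P : List V → Prop) :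
    Submodule K (OrderedChain K V) :=
  Finsupp.supported K K {t | P t}

lemma single_mem_supportedChains {t : List V} (ht : P t) (a : K) :
    Finsupp.single t a ∈ supportedChains K P :=
  Finsupp.single_mem_supported K a ht

lemma supportedChains_mono (h : ∀ t, P t → Q t) : supportedChains K P ≤ supportedChains K Q :=
  Finsupp.supported_mono h

lemma map_mem_of_mem_supportedChains {Φ : OrderedChain K V →ₗ[K] C} {N : Submodule K C}
    (h : ∀ t, P t → Φ (Finsupp.single t 1) ∈ N) {c : OrderedChain K V}
    (hc : c ∈ supportedChains K P) : Φ c ∈ N := by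
  have hle : supportedChains K P ≤ N.comap Φ := by
    rw [supportedChains, Finsupp.supported_eq_span_single, Submodule.span_le]
    rintro _ ⟨t, ht, rfl⟩
    exact h t ht
  exact hle hc

lemma map_eq_of_mem_supportedChains {Φ Ψ : OrderedChain K V →ₗ[K] C}
    (h : ∀ t, P t → Φ (Finsupp.single t 1) = Ψ (Finsupp.single t 1)) {c : OrderedChain K V}
    (hc : c ∈ supportedChains K P) : Φ c = Ψ c := by
  have := map_mem_of_mem_supportedChains (Φ := Φ - Ψ) (N := ⊥)
    (fun t ht => by simp [h t ht]) hc
  simpa [sub_eq_zero] using this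

lemma cone_mem_supportedChains {v : V} (h : ∀ t, P t → Q (v :: t)) {c : OrderedChain K V}
    (hc : c ∈ supportedChains K P) : cone v c ∈ supportedChains K Q :=
  map_mem_of_mem_supportedChains
    (fun t ht => by simpa using single_mem_supportedChains (h t ht) (1 : K)) hc

lemma chainMap_mem_supportedChains {f : V → W} {Q : List W → Prop} (h : ∀ t, P t → Q (t.map f))
    {c : OrderedChain K V} (hc : c ∈ supportedChains K P) :
    chainMap f c ∈ supportedChains K Q :=
  map_mem_of_mem_supportedChains
    (fun t ht => by simpa using single_mem_supportedChains (h t ht) (1 : K)) hc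

lemma simplexBoundary_mem_supportedChains (t : List V) :
    simplexBoundary t ∈ supportedChains K fun s => s.length + 1 = t.length ∧ s.Sublist t := by
  induction t with
  | nil => exact Submodule.zero_mem _
  | cons v t ih =>
    refine Submodule.sub_mem _
      (single_mem_supportedChains ⟨rfl, List.sublist_cons_self v t⟩ 1) ?_
    exact cone_mem_supportedChains (fun s hs => ⟨by simp [hs.1], hs.2.cons_cons v⟩) ih

lemma map_simplexBoundary_mem {Φ : OrderedChain K V →ₗ[K] C} {N : Submodule K C} {t : List V}
    (h : ∀ s, s.length + 1 = t.length → s.Sublist t → Φ (Finsupp.single s 1) ∈ N) :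
    Φ (simplexBoundary t) ∈ N :=
  map_mem_of_mem_supportedChains (fun s hs => h s hs.1 hs.2) (simplexBoundary_mem_supportedChains t)

lemma map_simplexBoundary_eq {Φ Ψ : OrderedChain K V →ₗ[K] C} {t : List V}
    (h : ∀ s, s.length + 1 = t.length → Φ (Finsupp.single s 1) = Ψ (Finsupp.single s 1)) :
    Φ (simplexBoundary t) = Ψ (simplexBoundary t) :=
  map_eq_of_mem_supportedChains (fun s hs => h s hs.1) (simplexBoundary_mem_supportedChains t)

end SupportedChains

section Averages

variable {E : Type*}

lemma smul_sum_eq_sum_get [AddCommGroup E] [Module ℝ E] (L : List E) (a : ℝ) :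
    a • L.sum = ∑ i : Fin L.length, a • L.get i := by
  conv_lhs => rw [← List.ofFn_get L, List.sum_ofFn, Finset.smul_sum]

lemma average_mem [AddCommGroup E] [Module ℝ E] {A : Set E} (hA : Convex ℝ A) {L : List E}
    (hL : L ≠ []) (hmem : ∀ x ∈ L, x ∈ A) : (L.length : ℝ)⁻¹ • L.sum ∈ A := by
  rw [smul_sum_eq_sum_get]
  refine hA.sum_mem (fun _ _ => by positivity) ?_ (fun i _ => hmem _ (List.get_mem L i))
  simp [hL]

variable [NormedAddCommGroup E] [NormedSpace ℝ E]

lemma dist_average_le {L : List E} {D : ℝ} (hdist : ∀ x ∈ L, ∀ y ∈ L, dist x y ≤ D) {v : E}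
    (hv : v ∈ L) : dist v ((L.length : ℝ)⁻¹ • L.sum) ≤ (1 - (L.length : ℝ)⁻¹) * D := by
  have hpos : 0 < L.length := List.length_pos_of_mem hv
  have hn : (0 : ℝ) < L.length := mod_cast hpos
  obtain ⟨i, rfl⟩ := List.get_of_mem hv
  have hsub : L.get i - (L.length : ℝ)⁻¹ • L.sum =
      (L.length : ℝ)⁻¹ • ∑ j : Fin L.length, (L.get i - L.get j) := by
    rw [smul_sum_eq_sum_get, Finset.sum_sub_distrib, smul_sub, ← Finset.smul_sum, Finset.sum_const,
      Finset.card_fin, ← Nat.cast_smul_eq_nsmul ℝ, inv_smul_smul₀ hn.ne']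
  have hnorm : ‖∑ j : Fin L.length, (L.get i - L.get j)‖ ≤ ((L.length : ℝ) - 1) * D := by
    rw [← Finset.add_sum_erase _ _ (Finset.mem_univ i), sub_self, zero_add]
    refine (norm_sum_le_of_le _ fun j _ => ?_).trans_eq ((Finset.sum_const D).trans ?_)
    · rw [← dist_eq_norm]
      exact hdist _ (List.get_mem L i) _ (List.get_mem L j)
    · rw [Finset.card_erase_of_mem (Finset.mem_univ i), Finset.card_fin, nsmul_eq_mul,
        Nat.cast_sub hpos, Nat.cast_one]
  rw [dist_eq_norm, hsub, norm_smul, norm_inv, Real.norm_natCast]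
  calc (L.length : ℝ)⁻¹ * ‖∑ j : Fin L.length, (L.get i - L.get j)‖
      ≤ (L.length : ℝ)⁻¹ * (((L.length : ℝ) - 1) * D) := by gcongr
    _ = (1 - (L.length : ℝ)⁻¹) * D := by field_simp

end Averages

section Subdivision

variable {K E G : Type*} [CommRing K] [AddCommGroup E] [Module ℝ E]

/-- The barycenter of the simplex `v :: t` in the first component. The second component is a tag
carried along so that the symmetry group acts freely on vertices; the barycenter takes the tag of
the leading vertex. -/
def bary (v : E × G) (t : List (E × G)) : E × G :=
  ((((v :: t).map Prod.fst).length : ℝ)⁻¹ • ((v :: t).map Prod.fst).sum, v.2)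

/-- Barycentric subdivision of a single simplex of at most `n` vertices, by recursion on `n`. -/
def subdivisionAux (K : Type*) [CommRing K] : ℕ → List (E × G) → OrderedChain K (E × G)
  | 0, _ => Finsupp.single [] 1
  | _ + 1, [] => Finsupp.single [] 1
  | n + 1, v :: t => cone (bary v t)
      (Finsupp.linearCombination K (subdivisionAux K n) (simplexBoundary (v :: t)))

/-- Barycentric subdivision of chains: the subdivision of a simplex is the cone, from its
barycenter, over the subdivision of its boundary. -/
def subdivision : OrderedChain K (E × G) →ₗ[K] OrderedChain K (E × G) :=
  Finsupp.linearCombination K fun t => subdivisionAux K t.length t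

lemma subdivision_single (t : List (E × G)) :
    subdivision (Finsupp.single t 1) = subdivisionAux K t.length t := by
  simp [subdivision]

lemma subdivision_nil :
    subdivision (Finsupp.single ([] : List (E × G)) (1 : K)) = Finsupp.single [] 1 :=
  subdivision_single []

lemma subdivision_cons (v : E × G) (t : List (E × G)) :
    subdivision (Finsupp.single (v :: t) (1 : K)) =
      cone (bary v t) (subdivision (simplexBoundary (v :: t))) := by
  rw [subdivision_single, List.length_cons, subdivisionAux]
  congr 1
  refine map_simplexBoundary_eq fun s hs => ?_
  rw [subdivision_single, show t.length = s.length by simpa using hs.symm]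
  simp

lemma subdivision_simplexBoundary (t : List (E × G)) :
    subdivision (simplexBoundary t) = boundary (subdivision (Finsupp.single t (1 : K))) := by
  induction hn : t.length generalizing t with
  | zero => simp [List.length_eq_zero_iff.1 hn, subdivision_nil, simplexBoundary]
  | succ n ih =>
    obtain ⟨v, t, rfl⟩ := List.exists_cons_of_length_eq_add_one hn
    have hcomm : (boundary ∘ₗ subdivision) (simplexBoundary (v :: t)) =
        (subdivision ∘ₗ boundary (K := K)) (simplexBoundary (v :: t)) :=
      map_simplexBoundary_eq fun s hs => by simp [ih s (by omega)]
    rw [LinearMap.comp_apply, LinearMap.comp_apply, boundary_simplexBoundary, map_zero] at hcomm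
    rw [subdivision_cons, boundary_cone, hcomm, map_zero, sub_zero]

lemma subdivision_boundary (c : OrderedChain K (E × G)) :
    subdivision (boundary c) = boundary (subdivision c) := by
  have h : subdivision ∘ₗ boundary = boundary (K := K) (V := E × G) ∘ₗ subdivision :=
    Finsupp.lhom_ext' fun t => LinearMap.ext_ring (by simp [subdivision_simplexBoundary])
  exact DFunLike.congr_fun h c

lemma subdivision_single_map {T : E × G → E × G}
    (hT : ∀ v t, T (bary v t) = bary (T v) (t.map T)) (t : List (E × G)) :
    subdivision (Finsupp.single (t.map T) (1 : K)) =
      chainMap T (subdivision (Finsupp.single t 1)) := by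
  induction hn : t.length generalizing t with
  | zero => simp [List.length_eq_zero_iff.1 hn, subdivision_nil]
  | succ n ih =>
    obtain ⟨v, t, rfl⟩ := List.exists_cons_of_length_eq_add_one hn
    have hcomm : (subdivision ∘ₗ chainMap T) (simplexBoundary (v :: t)) =
        (chainMap T ∘ₗ subdivision (K := K)) (simplexBoundary (v :: t)) :=
      map_simplexBoundary_eq fun s hs => by simp [ih s (by omega)]
    rw [LinearMap.comp_apply, LinearMap.comp_apply, chainMap_simplexBoundary] at hcomm
    rw [subdivision_cons, chainMap_cone, ← hcomm, hT, List.map_cons, subdivision_cons]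

lemma subdivision_chainMap {T : E × G → E × G} (hT : ∀ v t, T (bary v t) = bary (T v) (t.map T))
    (c : OrderedChain K (E × G)) : subdivision (chainMap T c) = chainMap T (subdivision c) := by
  have h : subdivision ∘ₗ chainMap T = chainMap (K := K) T ∘ₗ subdivision :=
    Finsupp.lhom_ext' fun t => LinearMap.ext_ring (by simp [subdivision_single_map hT])
  exact DFunLike.congr_fun h c

lemma bary_fst_mem {A : Set E} (hA : Convex ℝ A) {v : E × G} {t : List (E × G)}
    (hmem : ∀ x ∈ v :: t, x.1 ∈ A) : (bary v t).1 ∈ A :=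
  average_mem hA (by simp) (List.forall_mem_map.2 hmem)

lemma IsResolutionFamily.iterate_subdivision {κ : Type*} [LinearOrder κ] [Fintype κ] {p : ℕ}
    {T : κ → E × G → E × G} (hT : ∀ k v t, T k (bary v t) = bary (T k v) (t.map (T k)))
    {a : (κ → ℕ) → OrderedChain K (E × G)} (ha : IsResolutionFamily p T a) (J : ℕ) :
    IsResolutionFamily p T fun n => subdivision^[J] (a n) := by
  induction J with
  | zero => exact ha
  | succ J ih =>
    simpa only [Function.iterate_succ', Function.comp_apply] using
      ih.map subdivision (fun k => subdivision_chainMap (hT k)) subdivision_boundary subdivision_nil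

end Subdivision

section SmallSimplices

variable {E G : Type*} [PseudoMetricSpace E]

/-- A list of at most `M + 1` vertices with positions in `A`, pairwise at distance at most `D`. -/
def IsSmallSimplex (A : Set E) (M : ℕ) (D : ℝ) (s : List (E × G)) : Prop :=
  s.length ≤ M + 1 ∧ (∀ x ∈ s, x.1 ∈ A) ∧ ∀ x ∈ s, ∀ y ∈ s, dist x.1 y.1 ≤ D

variable {A B : Set E} {M : ℕ} {D : ℝ} {s t : List (E × G)}

lemma IsSmallSimplex.sublist (h : IsSmallSimplex A M D t) (hs : s.Sublist t) :
    IsSmallSimplex A M D s :=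
  ⟨hs.length_le.trans h.1, fun x hx => h.2.1 x (hs.subset hx),
    fun x hx y hy => h.2.2 x (hs.subset hx) y (hs.subset hy)⟩

lemma IsSmallSimplex.inter (h : IsSmallSimplex A M D s) (hB : ∀ x ∈ s, x.1 ∈ B) :
    IsSmallSimplex (A ∩ B) M D s :=
  ⟨h.1, fun x hx => ⟨h.2.1 x hx, hB x hx⟩, h.2.2⟩

lemma IsSmallSimplex.cons (hD : 0 ≤ D) {v : E × G} (hv : v.1 ∈ A)
    (h : IsSmallSimplex (A ∩ Metric.closedBall v.1 D) M D s) (hs : s.length ≤ M) :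
    IsSmallSimplex A M D (v :: s) := by
  refine ⟨Nat.succ_le_succ hs, ?_, ?_⟩
  · exact List.forall_mem_cons.2 ⟨hv, fun x hx => (h.2.1 x hx).1⟩
  · simp only [List.forall_mem_cons, dist_self]
    exact ⟨⟨hD, fun y hy => by rw [dist_comm]; exact (h.2.1 y hy).2⟩,
      fun x hx => ⟨(h.2.1 x hx).2, h.2.2 x hx⟩⟩

end SmallSimplices

section SmallSubdivision

variable {K E G : Type*} [CommRing K] [NormedAddCommGroup E] [NormedSpace ℝ E]

lemma IsSmallSimplex.dist_bary_le {A : Set E} {M : ℕ} {D : ℝ} {v : E × G} {t : List (E × G)}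
    (h : IsSmallSimplex A M D (v :: t)) {x : E × G} (hx : x ∈ v :: t) :
    dist x.1 (bary v t).1 ≤ M / (M + 1) * D := by
  have hD : 0 ≤ D := by simpa using h.2.2 x hx x hx
  have hlength : (((v :: t).map Prod.fst).length : ℝ) ≤ M + 1 := by
    rw [List.length_map]
    exact_mod_cast h.1
  have hM : (M / (M + 1) : ℝ) = 1 - (M + 1 : ℝ)⁻¹ := by field_simp; ring
  rw [hM]
  refine (dist_average_le (D := D) ?_ (List.mem_map_of_mem hx)).trans ?_
  · simp only [List.forall_mem_map]
    exact h.2.2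
  · gcongr
    simp only [List.map_cons, List.length_cons]
    positivity

/-- The cell is intersected with a ball around the barycenter in the induction, so that the new
apex stays close to all the other vertices. -/
lemma subdivision_single_mem {A : Set E} (hA : Convex ℝ A) {M : ℕ} {D : ℝ} {t : List (E × G)}
    (ht : IsSmallSimplex A M D t) :
    subdivision (Finsupp.single t (1 : K)) ∈ supportedChains K fun s =>
      s.length = t.length ∧ IsSmallSimplex A M (M / (M + 1) * D) s := by
  induction hn : t.length generalizing t A with
  | zero =>
    rw [List.length_eq_zero_iff.1 hn, subdivision_nil]
    exact single_mem_supportedChains (by simp [IsSmallSimplex]) 1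
  | succ n ih =>
    obtain ⟨v, t, rfl⟩ := List.exists_cons_of_length_eq_add_one hn
    have hD : 0 ≤ M / (M + 1) * D := dist_nonneg.trans (ht.dist_bary_le List.mem_cons_self)
    rw [subdivision_cons]
    have hmem : subdivision (simplexBoundary (v :: t)) ∈ supportedChains K fun s => s.length = n ∧
        IsSmallSimplex (A ∩ Metric.closedBall (bary v t).1 (M / (M + 1) * D)) M
          (M / (M + 1) * D) s := by
      refine map_simplexBoundary_mem fun s hs hsub =>
        ih (hA.inter (convex_closedBall _ _))
          ((ht.sublist hsub).inter fun x hx => ht.dist_bary_le (hsub.subset hx)) (by omega)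
    refine cone_mem_supportedChains (fun s hs => ⟨by simp [hs.1], ?_⟩) hmem
    exact hs.2.cons hD (bary_fst_mem hA ht.2.1) (by simpa [hs.1, hn] using ht.1)

variable {I : Type*} {A : I → Set E}

lemma iterate_subdivision_mem (hA : ∀ i, Convex ℝ (A i)) {M : ℕ} {D : ℝ}
    {c : OrderedChain K (E × G)}
    (hc : c ∈ supportedChains K fun s => ∃ i, IsSmallSimplex (A i) M D s) (J : ℕ) :
    subdivision^[J] c ∈
      supportedChains K fun s => ∃ i, IsSmallSimplex (A i) M ((M / (M + 1)) ^ J * D) s := by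
  induction J with
  | zero => simpa using hc
  | succ J ih =>
    rw [Function.iterate_succ', pow_succ', mul_assoc]
    refine map_mem_of_mem_supportedChains ?_ ih
    rintro t ⟨i, ht⟩
    exact supportedChains_mono (fun s hs => ⟨i, hs.2⟩) (subdivision_single_mem (hA i) ht)

end SmallSubdivision

/-! ### The deleted join -/

section DeletedJoin

variable {ι G : Type*}

/-- The action of `G` on arrays of weights by permuting the copies; `y v i` is the weight of the
vertex `v` in the `i`-th copy. -/
def copyShift [AddCommGroup G] (g : G) : (ι → G → ℝ) →ₗ[ℝ] (ι → G → ℝ) where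
  toFun y v i := y v (i - g)
  map_add' _ _ := rfl
  map_smul' _ _ := rfl

@[simp] lemma copyShift_apply [AddCommGroup G] (g : G) (y : ι → G → ℝ) (v : ι) (i : G) :
    copyShift g y v i = y v (i - g) := rfl

lemma copyShift_copyShift [AddCommGroup G] (g h : G) (y : ι → G → ℝ) :
    copyShift g (copyShift h y) = copyShift (g + h) y := by
  ext v i
  simp [sub_sub]

/-- The vertex of the deleted join given by `v` in the `i`-th copy. -/
def joinVertex [DecidableEq ι] [DecidableEq G] (v : ι) (i : G) : ι → G → ℝ :=
  Pi.single v (Pi.single i 1)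

lemma joinVertex_apply [DecidableEq ι] [DecidableEq G] (v w : ι) (i j : G) :
    joinVertex v i w j = if w = v then if j = i then 1 else 0 else 0 := by
  rcases eq_or_ne w v with rfl | hw <;> simp [joinVertex, Pi.single_apply, *]

lemma copyShift_joinVertex [DecidableEq ι] [DecidableEq G] [AddCommGroup G] (g : G) (v : ι)
    (i : G) : copyShift g (joinVertex v i) = joinVertex v (i + g) := by
  ext w j
  simp only [copyShift_apply, joinVertex_apply, sub_eq_iff_eq_add]

variable [Fintype ι] [Fintype G]

/-- A maximal simplex of the deleted join: the vertex `v` may carry weight only in copy `c v`. -/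
def joinCell (c : ι → G) : Set (ι → G → ℝ) :=
  {y | (∀ v i, 0 ≤ y v i) ∧ ∑ v, ∑ i, y v i = 1 ∧ ∀ v i, i ≠ c v → y v i = 0}

variable (ι G) in
/-- The deleted join of copies of the simplex on `ι` indexed by `G`, i.e. the join of copies of the
discrete set `G` indexed by `ι`. -/
def deletedJoin : Set (ι → G → ℝ) := ⋃ c, joinCell c

variable {c : ι → G}

lemma convex_joinCell (c : ι → G) : Convex ℝ (joinCell c) := by
  rintro y ⟨hy, hysum, hyc⟩ z ⟨hz, hzsum, hzc⟩ a b ha hb hab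
  refine ⟨fun v i => ?_, ?_, fun v i h => by simp [hyc v i h, hzc v i h]⟩
  · exact add_nonneg (mul_nonneg ha (hy v i)) (mul_nonneg hb (hz v i))
  · simp [Finset.sum_add_distrib, ← Finset.mul_sum, hysum, hzsum, hab]

lemma joinCell_subset_Icc (c : ι → G) : joinCell c ⊆ Set.Icc 0 1 := by
  rintro y ⟨hy, hsum, -⟩
  refine ⟨hy, fun v i => ?_⟩
  calc y v i ≤ ∑ i, y v i := Finset.single_le_sum (fun i _ => hy v i) (Finset.mem_univ i)
    _ ≤ ∑ v, ∑ i, y v i := Finset.single_le_sum (f := fun v => ∑ i, y v i)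
        (fun v _ => Finset.sum_nonneg fun i _ => hy v i) (Finset.mem_univ v)
    _ = 1 := hsum

lemma isClosed_joinCell (c : ι → G) : IsClosed (joinCell c) := by
  simp only [joinCell, Set.ofPred_and, Set.ofPred_forall]
  refine IsClosed.inter ?_ (IsClosed.inter ?_ ?_)
  · exact isClosed_iInter fun v => isClosed_iInter fun i =>
      isClosed_le continuous_const (by fun_prop)
  · exact isClosed_eq (by fun_prop) continuous_const
  · exact isClosed_iInter fun v => isClosed_iInter fun i => isClosed_iInter fun _ =>
      isClosed_eq (by fun_prop) continuous_const

lemma isCompact_deletedJoin : IsCompact (deletedJoin ι G) :=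
  isCompact_iUnion fun c => isCompact_Icc.of_isClosed_subset (isClosed_joinCell c)
    (joinCell_subset_Icc c)

lemma dist_le_one_of_mem_joinCell {y z : ι → G → ℝ} (hy : y ∈ joinCell c) (hz : z ∈ joinCell c) :
    dist y z ≤ 1 := by
  refine (dist_pi_le_iff zero_le_one).2 fun v => (dist_pi_le_iff zero_le_one).2 fun i => ?_
  have hy' := joinCell_subset_Icc c hy
  have hz' := joinCell_subset_Icc c hz
  exact Real.dist_le_of_mem_Icc_01 ⟨hy'.1 v i, hy'.2 v i⟩ ⟨hz'.1 v i, hz'.2 v i⟩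

lemma joinVertex_mem_joinCell [DecidableEq ι] [DecidableEq G] (c : ι → G) (v : ι) :
    joinVertex v (c v) ∈ joinCell c := by
  refine ⟨fun w j => ?_, by simp [joinVertex_apply], fun w j hj => ?_⟩
  · rw [joinVertex_apply]
    split_ifs <;> norm_num
  · rw [joinVertex_apply]
    split_ifs with hw hj'
    · exact absurd (hw ▸ hj') hj
    all_goals rfl

lemma deletedJoin_nonempty [Nonempty ι] [Nonempty G] : (deletedJoin ι G).Nonempty := by
  classical
  obtain ⟨v⟩ := ‹Nonempty ι›
  obtain ⟨i⟩ := ‹Nonempty G›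
  exact ⟨_, Set.mem_iUnion.2 ⟨fun _ => i, joinVertex_mem_joinCell (fun _ => i) v⟩⟩

end DeletedJoin

section JoinResolution

variable {ι κ : Type*} {p : ℕ} [DecidableEq κ]

/-- The action of the generators of `(ℤ/p)^κ` on arrays tagged by elements of the group. The tag
makes the action on the vertices of subdivisions free, see `bary`. -/
def joinGenerator (p : ℕ) (k : κ) (x : (ι → (κ → ZMod p) → ℝ) × (κ → ZMod p)) :
    (ι → (κ → ZMod p) → ℝ) × (κ → ZMod p) :=
  (copyShift (Pi.single k 1) x.1, x.2 + Pi.single k 1)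

lemma joinGenerator_iterate (k : κ) (i : ℕ)
    (x : (ι → (κ → ZMod p) → ℝ) × (κ → ZMod p)) :
    (joinGenerator p k)^[i] x =
      (copyShift (i • Pi.single k 1) x.1, x.2 + i • Pi.single k 1) := by
  induction i with
  | zero => ext <;> simp
  | succ i ih =>
    rw [Function.iterate_succ_apply', ih, joinGenerator, copyShift_copyShift, succ_nsmul',
      add_assoc, add_comm (Pi.single k 1)]

lemma joinGenerator_iterate_self (k : κ) :
    (joinGenerator p k : (ι → (κ → ZMod p) → ℝ) × (κ → ZMod p) → _)^[p] = id := by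
  have h : p • (Pi.single k 1 : κ → ZMod p) = 0 := by
    rw [← Pi.single_smul, nsmul_one, ZMod.natCast_self, Pi.single_zero]
  ext x <;> simp [joinGenerator_iterate, h]

lemma joinGenerator_commute (k l : κ) :
    Function.Commute (joinGenerator (ι := ι) p k) (joinGenerator p l) := fun x =>
  Prod.ext (by simp only [joinGenerator, copyShift_copyShift, add_comm])
    (add_right_comm _ _ _)

lemma joinGenerator_bary (k : κ) (v : (ι → (κ → ZMod p) → ℝ) × (κ → ZMod p))
    (t : List ((ι → (κ → ZMod p) → ℝ) × (κ → ZMod p))) :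
    joinGenerator p k (bary v t) = bary (joinGenerator p k v) (t.map (joinGenerator p k)) :=
  Prod.ext (by simp [joinGenerator, bary, Function.comp_def, map_list_sum]) rfl

end JoinResolution

section InitialSimplices

lemma resOp_mem_supportedChains {K V κ : Type*} [CommRing K] {p : ℕ} {T : κ → V → V} {k : κ}
    {P : List V → Prop} (hP : ∀ t, P t → P (t.map (T k))) (m : ℕ) {c : OrderedChain K V}
    (hc : c ∈ supportedChains K P) : resOp p T k m c ∈ supportedChains K P :=
  periodicCoeff_apply_mem p m (fun _ => chainMap_mem_supportedChains hP) hc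

variable {M : ℕ}

/-- A simplex of the deleted join with `m` listed vertices, all of them copies of the first `m`
vertices of the ground simplex. -/
def IsInitialSimplex {G : Type*} [DecidableEq G] (m : ℕ)
    (s : List ((Fin (M + 1) → G → ℝ) × G)) : Prop :=
  s.length = m ∧ ∃ c : Fin (M + 1) → G, ∀ x ∈ s, ∃ v : Fin (M + 1), v < m ∧ x.1 = joinVertex v (c v)

section

variable {G : Type*} [DecidableEq G] {m : ℕ} {s : List ((Fin (M + 1) → G → ℝ) × G)}

lemma IsInitialSimplex.cons (h : IsInitialSimplex m s) {v : Fin (M + 1)} (hv : v = m) (i g : G) :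
    IsInitialSimplex (m + 1) ((joinVertex v i, g) :: s) := by
  obtain ⟨hs, c, hc⟩ := h
  refine ⟨by simp [hs], Function.update c v i, List.forall_mem_cons.2 ⟨⟨v, by omega, ?_⟩, ?_⟩⟩
  · rw [Function.update_self]
  · intro x hx
    obtain ⟨w, hw, hxw⟩ := hc x hx
    have hwv : w ≠ v := by
      rintro rfl
      omega
    exact ⟨w, by omega, by rw [hxw, Function.update_of_ne hwv]⟩

lemma IsInitialSimplex.exists_isSmallSimplex [Fintype G] (h : IsInitialSimplex m s)
    (hm : m ≤ M + 1) : ∃ c, IsSmallSimplex (joinCell c) M 1 s := by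
  obtain ⟨rfl, c, hc⟩ := h
  have hmem : ∀ x ∈ s, x.1 ∈ joinCell c := fun x hx => by
    obtain ⟨v, -, hv⟩ := hc x hx
    exact hv ▸ joinVertex_mem_joinCell c v
  exact ⟨c, hm, hmem, fun x hx y hy => dist_le_one_of_mem_joinCell (hmem x hx) (hmem y hy)⟩

end

variable {K κ : Type*} [CommRing K] [LinearOrder κ] [Fintype κ] {p m : ℕ}

lemma IsInitialSimplex.map_joinGenerator {s : List ((Fin (M + 1) → (κ → ZMod p) → ℝ) × _)}
    (h : IsInitialSimplex m s) (k : κ) : IsInitialSimplex m (s.map (joinGenerator p k)) := by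
  obtain ⟨hs, c, hc⟩ := h
  refine ⟨by simp [hs], fun v => c v + Pi.single k 1, List.forall_mem_map.2 fun x hx => ?_⟩
  obtain ⟨v, hv, hxv⟩ := hc x hx
  exact ⟨v, hv, by rw [joinGenerator, hxv, copyShift_joinVertex]⟩

/-- The apices successively used to build a resolution family inside the deleted join: in degree
`m` one cones with a copy of the `m`-th vertex, which has not been used in lower degrees. -/
def joinApex (M p : ℕ) (n : κ → ℕ) : (Fin (M + 1) → (κ → ZMod p) → ℝ) × (κ → ZMod p) :=
  (joinVertex (Fin.ofNat (M + 1) (∑ j, n j)) 0, 0)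

lemma IsConedFamily.mem_supportedChains_isInitialSimplex
    {a : (κ → ℕ) → OrderedChain K ((Fin (M + 1) → (κ → ZMod p) → ℝ) × (κ → ZMod p))}
    (ha : IsConedFamily p (joinGenerator p) (joinApex M p) a) {n : κ → ℕ} (hn : ∑ j, n j = m)
    (hm : m ≤ M) : a n ∈ supportedChains K (IsInitialSimplex (m + 1)) := by
  have hapex : ∀ {n : κ → ℕ} {m}, ∑ j, n j = m → m ≤ M →
      (Fin.ofNat (M + 1) (∑ j, n j) : ℕ) = m := fun {n m} hn hm => by
    rw [Fin.val_ofNat, hn, Nat.mod_eq_of_lt (by omega)]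
  induction m generalizing n with
  | zero =>
    obtain rfl : n = 0 := by simpa [funext_iff] using hn
    rw [ha.apply_zero]
    exact single_mem_supportedChains
      (IsInitialSimplex.cons (s := []) ⟨rfl, 0, by simp⟩ (hapex hn hm) 0 0) 1
  | succ m ih =>
    rw [ha.apply_of_ne_zero (by rintro rfl; simp at hn)]
    refine cone_mem_supportedChains (fun s hs => IsInitialSimplex.cons hs (hapex hn hm) 0 0) ?_
    rw [totalDiff_apply]
    refine Submodule.sum_mem _ fun k _ => ?_
    rw [partialDiff_apply]
    split_ifs with hk
    · exact Submodule.zero_mem _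
    · have := sum_lower_add_one n hk
      exact Submodule.smul_mem _ _ <| resOp_mem_supportedChains
        (fun t ht => ht.map_joinGenerator k) _ (ih (by omega) (by omega))

end InitialSimplices

/-! ### Equivariant maps from the deleted join to sums of regular representations -/

section Sperner

lemma exists_list_pairwise_ge {α κ : Type*} [Fintype α] [LinearOrder κ] (f : α → κ) :
    ∃ S : List α, S.Pairwise (fun s s' => f s' ≤ f s) ∧ (∀ s, s ∈ S) ∧
      S.length = Fintype.card α := by
  classical
  have : Std.Total fun s s' => f s' ≤ f s := ⟨fun _ _ => le_total _ _⟩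
  have : IsTrans α fun s s' => f s' ≤ f s := ⟨fun _ _ _ h h' => h'.trans h⟩
  refine ⟨Finset.univ.toList.insertionSort fun s s' => f s' ≤ f s,
    List.pairwise_insertionSort _ _, fun s => ?_, ?_⟩
  · simp [List.mem_insertionSort]
  · simp [List.length_insertionSort]

variable {p M : ℕ} [Fact p.Prime] {κ ι : Type*} [LinearOrder κ] [Fintype κ] {g : κ → ι → ZMod p}
  {η : (Fin (M + 1) → (κ → ZMod p) → ℝ) × (κ → ZMod p) → ι → ZMod p}

/-- An equivariant labelling carries the subdivided resolution family of the deleted join to a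
resolution family of the labels, on which the Euler cocycle takes the same value as on the coned
one. -/
lemma exists_isSmallSimplex_eulerCocycle_ne_zero
    (hη : ∀ k x, η (joinGenerator p k x) = translate g k (η x)) {lead : ι → κ}
    (hlead : ∀ s, IsLeadingIndex (fun k => g k s) (lead s)) {S : List ι}
    (hS : S.Pairwise fun s s' => lead s' ≤ lead s) (hM : S.length * (p - 1) = M) {δ : ℝ}
    (hδ : 0 < δ) :
    ∃ t c, IsSmallSimplex (joinCell c) M δ t ∧ eulerCocycle p S (t.map η) ≠ 0 := by
  by_contra! hcon
  obtain ⟨a, ha⟩ := exists_isConedFamily (K := ZMod p) p (translate g) fun _ => 0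
  obtain ⟨b, hb⟩ := exists_isConedFamily (K := ZMod p) p (joinGenerator p) (joinApex M p (κ := κ))
  have hbη (J : ℕ) : IsResolutionFamily p (translate g)
      fun n => chainMap η (subdivision^[J] (b n)) :=
    ((hb.isResolutionFamily joinGenerator_iterate_self joinGenerator_commute).iterate_subdivision
      joinGenerator_bary J).map (chainMap η)
      (fun k z => by
        rw [chainMap_chainMap, chainMap_chainMap]
        congr 2
        exact funext (hη k))
      (chainMap_boundary η) (by simp)
  obtain ⟨J, hJ⟩ := exists_pow_lt_of_lt_one hδ
    (show (M / (M + 1) : ℝ) < 1 by rw [div_lt_one (by positivity)]; linarith)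
  have hsmall : subdivision^[J] (b (eulerDegree p lead S)) ∈
      supportedChains (ZMod p) fun s => ∃ c, IsSmallSimplex (joinCell c) M δ s := by
    refine supportedChains_mono ?_ (iterate_subdivision_mem convex_joinCell (D := 1)
      (supportedChains_mono (fun s hs => hs.exists_isSmallSimplex le_rfl) <|
        hb.mem_supportedChains_isInitialSimplex ((sum_eulerDegree p lead S).trans hM) le_rfl) J)
    exact fun s ⟨c, hlen, hcell, hdist⟩ =>
      ⟨c, hlen, hcell, fun x hx y hy => (hdist x hx y hy).trans (by linarith)⟩
  refine ha.eval_eulerCocycle_ne_zero hlead hS ?_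
  rw [(ha.isResolutionFamily (translate_iterate_self g) (translate_commute g)).eval_eq
    (translate_iterate_self g) (translate_commute g) (hbη J) (coboundary_eulerCocycle p S)
    (fun k t => eulerCocycle_map_add_right p S (g k) t), eval_chainMap]
  have hmem := map_mem_of_mem_supportedChains (N := ⊥)
    (Φ := eval fun t => eulerCocycle p S (t.map η)) (fun t ⟨c, hc⟩ => by simp [hcon t c hc]) hsmall
  simpa using hmem

variable {α : Type*} [Fintype α]

/-- The values of the generators of `(ℤ/p)^κ` under the normalized functionals, each functional
being repeated `α` times. -/
def functionalValues (p : ℕ) (κ α : Type*) [LT κ] (k : κ)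
    (s : NormalizedFunctional (ZMod p) κ × α) : ZMod p :=
  s.1.1 k

lemma exists_isSmallSimplex_forall_exists_eq (hM : M = (p ^ Fintype.card κ - 1) * Fintype.card α)
    {η : (Fin (M + 1) → (κ → ZMod p) → ℝ) × (κ → ZMod p) →
      NormalizedFunctional (ZMod p) κ × α → ZMod p}
    (hη : ∀ k x, η (joinGenerator p k x) = translate (functionalValues p κ α) k (η x)) {δ : ℝ}
    (hδ : 0 < δ) :
    ∃ t c, IsSmallSimplex (joinCell c) M δ t ∧ t ≠ [] ∧ ∀ s b, ∃ x ∈ t, η x s = b := by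
  classical
  choose lead hlead using fun s : NormalizedFunctional (ZMod p) κ × α => s.1.2
  obtain ⟨S, hS, hmem, hlength⟩ := exists_list_pairwise_ge lead
  have hSM : S.length * (p - 1) = M := by
    have hcard := card_normalizedFunctional (K := ZMod p) (κ := κ)
    rw [ZMod.card] at hcard
    rw [hlength, Fintype.card_prod, hM, ← hcard, mul_right_comm]
  obtain ⟨t, c, ht, hne⟩ := exists_isSmallSimplex_eulerCocycle_ne_zero hη hlead hS hSM hδ
  refine ⟨t, c, ht, ?_, fun s b => ?_⟩
  · rintro rfl
    exact hne (eulerCocycle_apply_nil p S)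
  · obtain ⟨v, hv, hvs⟩ := exists_mem_eq_of_eulerCocycle_ne_zero p hne (hmem s) b
    obtain ⟨x, hx, rfl⟩ := List.mem_map.1 hv
    exact ⟨x, hx, hvs⟩

end Sperner

section EquivariantMaps

variable {p M : ℕ} [Fact p.Prime] {κ α : Type*} [LinearOrder κ] [Fintype κ]

lemma exists_equivariant_maximal_label {ι : Type*}
    {W : (ι → (κ → ZMod p) → ℝ) → NormalizedFunctional (ZMod p) κ × α → ZMod p → ℝ}
    (hW : ∀ g y s c, W (copyShift g y) s c = W y s (c - s.1.1 ⬝ᵥ g)) :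
    ∃ η : (ι → (κ → ZMod p) → ℝ) × (κ → ZMod p) → NormalizedFunctional (ZMod p) κ × α → ZMod p,
      (∀ k x, η (joinGenerator p k x) = translate (functionalValues p κ α) k (η x)) ∧
        ∀ x s c, W x.1 s c ≤ W x.1 s (η x s) := by
  -- Maximal positions are not unique, so equivariance is forced by choosing them at the array moved
  -- back along its tag.
  choose m hm using fun y s => Finite.exists_max (W y s)
  refine ⟨fun x s => m (copyShift (-x.2) x.1) s + s.1.1 ⬝ᵥ x.2, fun k x => ?_, fun x s c => ?_⟩
  · ext s
    have hback : copyShift (-(x.2 + Pi.single k 1)) (copyShift (Pi.single k 1) x.1) =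
        copyShift (-x.2) x.1 := by
      rw [copyShift_copyShift, neg_add, neg_add_cancel_right]
    simp only [joinGenerator, hback, translate, dotProduct_add]
    simp [functionalValues, add_assoc]
  · simpa [hW] using hm (copyShift (-x.2) x.1) s (c - s.1.1 ⬝ᵥ x.2)

variable [Fintype α]
  {W : (Fin (M + 1) → (κ → ZMod p) → ℝ) → NormalizedFunctional (ZMod p) κ × α → ZMod p → ℝ}

lemma exists_mem_deletedJoin_forall_sub_le (hM : M = (p ^ Fintype.card κ - 1) * Fintype.card α)
    (hWc : ContinuousOn W (deletedJoin (Fin (M + 1)) (κ → ZMod p)))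
    (hW : ∀ g y s c, W (copyShift g y) s c = W y s (c - s.1.1 ⬝ᵥ g)) {ω : ℝ} (hω : 0 < ω) :
    ∃ y ∈ deletedJoin (Fin (M + 1)) (κ → ZMod p), ∀ s b c, W y s b - W y s c ≤ ω := by
  classical
  have huc := isCompact_deletedJoin.uniformContinuousOn_of_continuous hWc
  obtain ⟨δ, hδ, hδω⟩ := Metric.uniformContinuousOn_iff_le.1 huc (ω / 2) (half_pos hω)
  obtain ⟨η, hη, hmax⟩ := exists_equivariant_maximal_label hW
  obtain ⟨t, a, ⟨-, hta, htδ⟩, ht, hlabel⟩ := exists_isSmallSimplex_forall_exists_eq hM hη hδ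
  obtain ⟨y, hy⟩ := List.exists_mem_of_ne_nil t ht
  have hjoin : ∀ x ∈ t, x.1 ∈ deletedJoin (Fin (M + 1)) (κ → ZMod p) := fun x hx =>
    Set.mem_iUnion.2 ⟨a, hta x hx⟩
  have hclose : ∀ x ∈ t, ∀ s c, |W x.1 s c - W y.1 s c| ≤ ω / 2 := fun x hx s c =>
    calc |W x.1 s c - W y.1 s c| = dist (W x.1 s c) (W y.1 s c) := (Real.dist_eq _ _).symm
      _ ≤ dist (W x.1) (W y.1) := (dist_le_pi_dist _ _ c).trans (dist_le_pi_dist _ _ s)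
      _ ≤ ω / 2 := hδω x.1 (hjoin x hx) y.1 (hjoin y hy) (htδ x hx y hy)
  refine ⟨y.1, hjoin y hy, fun s b c => ?_⟩
  obtain ⟨x, hx, rfl⟩ := hlabel s c
  have hb := abs_le.1 (hclose x hx s b)
  have hc := abs_le.1 (hclose x hx s (η x s))
  linarith [hmax x s b]

lemma exists_mem_deletedJoin_forall_eq (hM : M = (p ^ Fintype.card κ - 1) * Fintype.card α)
    (hWc : ContinuousOn W (deletedJoin (Fin (M + 1)) (κ → ZMod p)))
    (hW : ∀ g y s c, W (copyShift g y) s c = W y s (c - s.1.1 ⬝ᵥ g)) :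
    ∃ y ∈ deletedJoin (Fin (M + 1)) (κ → ZMod p), ∀ s b c, W y s b = W y s c := by
  classical
  let variation (y : Fin (M + 1) → (κ → ZMod p) → ℝ) (s : NormalizedFunctional (ZMod p) κ × α)
      (b c : ZMod p) : ℝ := W y s b - W y s c
  have hcont : ContinuousOn variation (deletedJoin (Fin (M + 1)) (κ → ZMod p)) := by
    refine continuousOn_pi.2 fun s => continuousOn_pi.2 fun b => continuousOn_pi.2 fun c => ?_
    have hWs := continuousOn_pi.1 (continuousOn_pi.1 hWc s)
    exact (hWs b).sub (hWs c)
  obtain ⟨y, hy, hmin⟩ := isCompact_deletedJoin.exists_isMinOn deletedJoin_nonempty hcont.norm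
  refine ⟨y, hy, fun s b c => ?_⟩
  have hzero : ‖variation y‖ ≤ 0 := by
    refine le_of_forall_pos_le_add fun ω hω => ?_
    obtain ⟨z, hz, hzω⟩ := exists_mem_deletedJoin_forall_sub_le hM hWc hW hω
    rw [zero_add]
    refine (hmin hz).trans <| (pi_norm_le_iff_of_nonneg hω.le).2 fun s =>
      (pi_norm_le_iff_of_nonneg hω.le).2 fun b => (pi_norm_le_iff_of_nonneg hω.le).2 fun c => ?_
    exact abs_sub_le_iff.2 ⟨hzω s b c, hzω s c b⟩
  exact sub_eq_zero.1 (congrFun (congrFun (congrFun (norm_le_zero_iff.1 hzero) s) b) c)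

lemma exists_mem_deletedJoin_forall_apply_eq
    (hM : M = (p ^ Fintype.card κ - 1) * Fintype.card α)
    {F : α → (Fin (M + 1) → (κ → ZMod p) → ℝ) → (κ → ZMod p) → ℝ}
    (hFc : ∀ j i, ContinuousOn (fun y => F j y i) (deletedJoin (Fin (M + 1)) (κ → ZMod p)))
    (hF : ∀ j g y i, F j (copyShift g y) i = F j y (i - g)) :
    ∃ y ∈ deletedJoin (Fin (M + 1)) (κ → ZMod p), ∀ j i i', F j y i = F j y i' := by
  obtain ⟨y, hy, heq⟩ := exists_mem_deletedJoin_forall_eq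
    (W := fun y s c => cosetSum (F s.2 y) s.1.1 c) hM
    (continuousOn_pi.2 fun s => continuousOn_pi.2 fun c => continuousOn_cosetSum (hFc s.2) _ c)
    fun g y s c => by rw [← cosetSum_comp_sub_right, ← funext (hF s.2 g y)]
  exact ⟨y, hy, fun j => eq_of_cosetSum_eq fun v => heq (v, j)⟩

end EquivariantMaps

/-! ### The topological Tverberg theorem for prime powers -/

section HomogeneousExtension

variable {ι E : Type*} [Fintype ι] [NormedAddCommGroup E] [NormedSpace ℝ E] {q : (ι → ℝ) → E}
  {x : ι → ℝ}

lemma inv_sum_smul_mem_stdSimplex (hx : 0 ≤ x) (h : ∑ v, x v ≠ 0) :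
    (∑ v, x v)⁻¹ • x ∈ stdSimplex ℝ ι := by
  refine ⟨fun v => mul_nonneg (inv_nonneg.2 (Finset.sum_nonneg fun v _ => hx v)) (hx v), ?_⟩
  simp only [Pi.smul_apply, smul_eq_mul, ← Finset.mul_sum]
  exact inv_mul_cancel₀ h

/-- The extension, homogeneous of degree one, of a function on the simplex to the nonnegative
orthant. At the origin it vanishes, whatever the junk value `q 0` is. -/
def homogeneousExtension {ι E : Type*} [Fintype ι] [AddCommMonoid E] [Module ℝ E]
    (q : (ι → ℝ) → E) (x : ι → ℝ) : E :=
  (∑ v, x v) • q ((∑ v, x v)⁻¹ • x)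

lemma norm_homogeneousExtension_le {C : ℝ} (hC : ∀ x ∈ stdSimplex ℝ ι, ‖q x‖ ≤ C) (hx : 0 ≤ x) :
    ‖homogeneousExtension q x‖ ≤ (∑ v, x v) * C := by
  have hsum : 0 ≤ ∑ v, x v := Finset.sum_nonneg fun v _ => hx v
  rw [homogeneousExtension, norm_smul, Real.norm_of_nonneg hsum]
  rcases eq_or_ne (∑ v, x v) 0 with h | h
  · simp [h]
  · exact mul_le_mul_of_nonneg_left (hC _ (inv_sum_smul_mem_stdSimplex hx h)) hsum

lemma continuousWithinAt_homogeneousExtension_of_sum_eq_zero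
    (hq : ContinuousOn q (stdSimplex ℝ ι)) (h : ∑ v, x v = 0) :
    ContinuousWithinAt (homogeneousExtension q) (Set.Ici 0) x := by
  obtain ⟨C, hC⟩ := (isCompact_stdSimplex ℝ ι).exists_bound_of_continuousOn hq
  have hlim : Filter.Tendsto (fun x : ι → ℝ => (∑ v, x v) * C) (nhdsWithin x (Set.Ici 0))
      (nhds 0) := by
    have hcont : Continuous fun x : ι → ℝ => (∑ v, x v) * C := by fun_prop
    simpa [h] using (hcont.tendsto x).mono_left nhdsWithin_le_nhds
  rw [ContinuousWithinAt, homogeneousExtension, h, zero_smul]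
  refine squeeze_zero_norm' ?_ hlim
  filter_upwards [self_mem_nhdsWithin] with y hy using norm_homogeneousExtension_le hC hy

lemma continuousWithinAt_homogeneousExtension_of_sum_ne_zero
    (hq : ContinuousOn q (stdSimplex ℝ ι)) (hx : 0 ≤ x) (h : ∑ v, x v ≠ 0) :
    ContinuousWithinAt (homogeneousExtension q) (Set.Ici 0) x := by
  have hsum : Continuous fun x : ι → ℝ => ∑ v, x v := by fun_prop
  have hnormalize : ContinuousWithinAt (fun x : ι → ℝ => (∑ v, x v)⁻¹ • x)
      (Set.Ici 0 ∩ {x | ∑ v, x v ≠ 0}) x :=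
    (hsum.continuousAt.inv₀ h).continuousWithinAt.smul continuousWithinAt_id
  have hcomp : ContinuousWithinAt (fun x : ι → ℝ => q ((∑ v, x v)⁻¹ • x))
      (Set.Ici 0 ∩ {x | ∑ v, x v ≠ 0}) x :=
    (hq _ (inv_sum_smul_mem_stdSimplex hx h)).comp (f := fun x : ι → ℝ => (∑ v, x v)⁻¹ • x)
      hnormalize fun y hy => inv_sum_smul_mem_stdSimplex hy.1 hy.2
  have hopen : {x : ι → ℝ | ∑ v, x v ≠ 0} ∈ nhds x :=
    (isOpen_ne_fun hsum continuous_const).mem_nhds h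
  exact hsum.continuousWithinAt.smul ((continuousWithinAt_inter hopen).1 hcomp)

lemma continuousOn_homogeneousExtension (hq : ContinuousOn q (stdSimplex ℝ ι)) :
    ContinuousOn (homogeneousExtension q) (Set.Ici 0) := fun x hx => by
  by_cases h : ∑ v, x v = 0
  · exact continuousWithinAt_homogeneousExtension_of_sum_eq_zero hq h
  · exact continuousWithinAt_homogeneousExtension_of_sum_ne_zero hq hx h

end HomogeneousExtension

section Tverberg

lemma exists_normalized_of_mem_deletedJoin {ι G E : Type*} [Fintype ι] [Fintype G] [AddCommGroup E]
    [Module ℝ E] {q : (ι → ℝ) → E} {y : ι → G → ℝ} (hy : y ∈ deletedJoin ι G)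
    (hsum : ∀ i i', ∑ v, y v i = ∑ v, y v i')
    (hq : ∀ i i', homogeneousExtension q (fun v => y v i) =
      homogeneousExtension q fun v => y v i') :
    ∃ x : G → ι → ℝ, (∀ i, x i ∈ stdSimplex ℝ ι) ∧
      Pairwise (fun i i' => Disjoint (support (x i)) (support (x i'))) ∧
      ∀ i i', q (x i) = q (x i') := by
  obtain ⟨c, hnonneg, htotal, hcolor⟩ := Set.mem_iUnion.1 hy
  have hne : ∀ i, ∑ v, y v i ≠ 0 := by
    intro i hi
    rw [Finset.sum_comm, Finset.sum_eq_zero fun i' _ => (hsum i' i).trans hi] at htotal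
    exact zero_ne_one htotal
  refine ⟨fun i => (∑ v, y v i)⁻¹ • fun v => y v i, fun i =>
    inv_sum_smul_mem_stdSimplex (fun v => hnonneg v i) (hne i), fun i i' hii' => ?_, fun i i' => ?_⟩
  · have hsupport : ∀ i v, v ∈ support ((∑ v, y v i)⁻¹ • fun v => y v i) → i = c v :=
      fun i v hv => by_contra fun h => hv (by simp [hcolor v i h])
    exact Set.disjoint_left.2 fun v hv hv' =>
      hii' ((hsupport i v hv).trans (hsupport i' v hv').symm)
  · have hii' := hq i i'
    simp only [homogeneousExtension, hsum i i'] at hii' ⊢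
    exact smul_right_injective E (hne i') hii'

variable {α : Type*} [Fintype α]

lemma topological_tverberg {p e r N : ℕ} (hp : p.Prime) (hr : r = p ^ e)
    (hN : N = (r - 1) * (Fintype.card α + 1)) {q : (Fin (N + 1) → ℝ) → α → ℝ}
    (hq : ContinuousOn q (stdSimplex ℝ (Fin (N + 1)))) :
    ∃ x : Fin r → Fin (N + 1) → ℝ, (∀ i, x i ∈ stdSimplex ℝ (Fin (N + 1))) ∧
      Pairwise (fun i i' => Disjoint (support (x i)) (support (x i'))) ∧
      ∀ i i', q (x i) = q (x i') := by
  have : Fact p.Prime := ⟨hp⟩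
  let F (j : Option α) (y : Fin (N + 1) → (Fin e → ZMod p) → ℝ) (i : Fin e → ZMod p) : ℝ :=
    j.elim (∑ v, y v i) fun j => homogeneousExtension (fun x => q x j) fun v => y v i
  have hF : ∀ j i, ContinuousOn (fun y => F j y i)
      (deletedJoin (Fin (N + 1)) (Fin e → ZMod p)) := by
    rintro (- | j) i
    · simp only [F, Option.elim_none]
      fun_prop
    · refine (continuousOn_homogeneousExtension (continuousOn_pi.1 hq j)).comp
        (Continuous.continuousOn (by fun_prop)) fun y hy v => ?_
      obtain ⟨c, hc⟩ := Set.mem_iUnion.1 hy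
      exact hc.1 v i
  obtain ⟨y, hy, hyF⟩ := exists_mem_deletedJoin_forall_apply_eq (by simp [hN, hr]) hF
    fun j g y i => by cases j <;> rfl
  obtain ⟨x, hx, hdisj, hxq⟩ := exists_normalized_of_mem_deletedJoin (q := q) hy
    (hyF none) fun i i' => funext fun j => hyF (some j) i i'
  have hcard : Fintype.card (Fin r) = Fintype.card (Fin e → ZMod p) := by simp [hr]
  let index := Fintype.equivOfCardEq hcard
  exact ⟨fun i => x (index i), fun i => hx _, fun i i' h => hdisj (index.injective.ne h),
    fun i i' => hxq _ _⟩

end Tverberg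

/-! ### The constraint function -/

section Constraint

variable {ι α : Type*} [Fintype ι] [Fintype α]

lemma support_nonempty_of_mem_stdSimplex {x : ι → ℝ} (hx : x ∈ stdSimplex ℝ ι) :
    (support x).Nonempty := by
  rw [Function.support_nonempty_iff]
  rintro rfl
  simpa using hx.2

lemma eval_esymm_eq_zero_iff {x : ι → ℝ} (hx : 0 ≤ x) (m : ℕ) :
    MvPolynomial.eval x (MvPolynomial.esymm ι ℝ m) = 0 ↔ (support x).encard < m := by
  simp only [MvPolynomial.esymm, map_sum, map_prod, MvPolynomial.eval_X]
  rw [Finset.sum_eq_zero_iff_of_nonneg fun T _ => Finset.prod_nonneg fun v _ => hx v, ← not_le,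
    iff_not_comm]
  simp only [Finset.mem_powersetCard_univ, not_forall, Finset.prod_ne_zero_iff, exists_prop]
  constructor
  · intro hm
    obtain ⟨T, hT, hcard⟩ := Set.exists_subset_encard_eq hm
    lift T to Finset ι using T.toFinite
    exact ⟨T, mod_cast hcard, fun v hv => hT hv⟩
  · rintro ⟨T, rfl, hT⟩
    rw [← Set.encard_coe_eq_coe_finsetCard]
    exact Set.encard_le_encard fun v hv => hT v hv

lemma exists_encard_lt_of_pairwise_disjoint {ρ : Type*} [Fintype ρ] {m : ℕ} {A : ρ → Set ι}
    (hA : Pairwise (Function.onFun Disjoint A)) (hcard : Fintype.card ι < Fintype.card ρ * m) :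
    ∃ i, (A i).encard < m := by
  by_contra! hle
  have : (Fintype.card ρ * m : ℕ∞) ≤ Fintype.card ι := by
    calc (Fintype.card ρ * m : ℕ∞) = ∑ _i : ρ, (m : ℕ∞) := by simp
      _ ≤ ∑ i, (A i).encard := Finset.sum_le_sum fun i _ => hle i
      _ = (⋃ i, A i).encard := by
        rw [Set.encard_iUnion_of_finite hA, finsum_eq_sum_of_fintype]
      _ ≤ Fintype.card ι := by rw [← ENat.card_eq_coe_fintype_card]; exact Set.encard_le_card
  exact hcard.not_ge (mod_cast this)

/-- Once one support is small, the constraint `esymm (k + 2)`, being equal on all points, makes all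
of them small. -/
lemma vanKampenFlores_of_lt_mul {p e r N k : ℕ} (hp : p.Prime) (hr : r = p ^ e)
    (hN : N = (r - 1) * (Fintype.card α + 2)) (hk : N + 1 < r * (k + 2))
    {q : (Fin (N + 1) → ℝ) → α → ℝ} (hq : ContinuousOn q (stdSimplex ℝ (Fin (N + 1)))) :
    ∃ x : Fin r → Fin (N + 1) → ℝ, (∀ i, x i ∈ stdSimplex ℝ (Fin (N + 1))) ∧
      Pairwise (fun i i' => Disjoint (support (x i)) (support (x i'))) ∧
      (∀ i, (support (x i)).encard ≤ k + 1) ∧ ∀ i i', q (x i) = q (x i') := by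
  obtain ⟨x, hx, hdisj, heq⟩ := topological_tverberg (α := Option α) hp hr (by simpa using hN)
    (q := fun x j => j.elim (MvPolynomial.eval x (MvPolynomial.esymm _ ℝ (k + 2))) (q x))
    (continuousOn_pi.2 <| by
      rintro (- | j)
      exacts [(MvPolynomial.continuous_eval _).continuousOn, continuousOn_pi.1 hq j])
  obtain ⟨i₀, hi₀⟩ := exists_encard_lt_of_pairwise_disjoint hdisj (m := k + 2) (by simpa using hk)
  refine ⟨x, hx, hdisj, fun i => ?_, fun i i' => funext fun j => congrFun (heq i i') (some j)⟩
  have hi : MvPolynomial.eval (x i) (MvPolynomial.esymm _ ℝ (k + 2)) =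
      MvPolynomial.eval (x i₀) (MvPolynomial.esymm _ ℝ (k + 2)) := congrFun (heq i i₀) none
  rw [(eval_esymm_eq_zero_iff (hx i₀).1 _).2 hi₀, eval_esymm_eq_zero_iff (hx i).1] at hi
  exact Order.le_of_lt_add_one (mod_cast hi)

lemma pred_mul_add_one_lt_mul_ceil {r : ℕ} (hr : 0 < r) (d : ℕ) :
    (r - 1) * (d + 2) + 1 < r * (⌈((r : ℚ) - 1) / r * d⌉₊ + 2) := by
  have hceil := Nat.le_ceil (((r : ℚ) - 1) / r * d)
  generalize ⌈((r : ℚ) - 1) / r * d⌉₊ = k at hceil ⊢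
  rw [div_mul_eq_mul_div, div_le_iff₀' (Nat.cast_pos.2 hr), ← Nat.cast_pred hr] at hceil
  have hmul : (r - 1) * d ≤ r * k := mod_cast hceil
  rw [mul_add, mul_add]
  omega

end Constraint

end VanKampenFlores

open VanKampenFlores

/-- The topological generalized Van Kampen–Flores theorem. -/
theorem topological_generalized_vanKampenFlores
    (d p ee : ℕ) (hp : p.Prime) (hd : 1 ≤ d)
    (r N k : ℕ) (hr : r = p ^ ee)
    (hN : N = (r - 1) * (d + 2))
    (hk : k = ⌈(((r : ℚ) - 1) / (r : ℚ)) * d⌉₊)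
    (f : EuclideanSpace ℝ (Fin (N + 1)) → EuclideanSpace ℝ (Fin d))
    (hf : ContinuousOn f (stdSimp N)) :
    ∃ σ : Fin r → Finset (Fin (N + 1)),
      (∀ j, (σ j).Nonempty) ∧
      (∀ j j', j ≠ j' → Disjoint (σ j) (σ j')) ∧
      (∀ j, (σ j).card ≤ k + 1) ∧
      (⋂ j, f '' simpFace N (σ j)).Nonempty := by
  have hr₀ : 0 < r := hr ▸ pow_pos hp.pos ee
  have hbound : N + 1 < r * (k + 2) := by
    rw [hN, hk]
    exact pred_mul_add_one_lt_mul_ceil hr₀ d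
  have hfq : ContinuousOn (fun x => WithLp.ofLp (f (WithLp.toLp 2 x)))
      (stdSimplex ℝ (Fin (N + 1))) :=
    (PiLp.continuous_ofLp 2 _).comp_continuousOn <|
      hf.comp (PiLp.continuous_toLp 2 _).continuousOn fun x hx => hx
  obtain ⟨x, hx, hdisj, hcard, heq⟩ :=
    vanKampenFlores_of_lt_mul hp hr (by simpa using hN) hbound hfq
  refine ⟨fun j => (support (x j)).toFinite.toFinset, fun j => ?_, fun j j' h => ?_, fun j => ?_,
    f (WithLp.toLp 2 (x ⟨0, hr₀⟩)), Set.mem_iInter.2 fun j => ?_⟩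
  · exact (Set.Finite.toFinset_nonempty _).2 (support_nonempty_of_mem_stdSimplex (hx j))
  · exact Set.Finite.disjoint_toFinset.2 (hdisj h)
  · have := hcard j
    rw [Set.Finite.encard_eq_coe_toFinset_card (Set.toFinite _)] at this
    exact_mod_cast this
  · exact ⟨WithLp.toLp 2 (x j), ⟨hx j, fun v hv => (Set.Finite.mem_toFinset _).2 hv⟩,
      WithLp.ofLp_injective 2 (heq _ _)⟩
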